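/- arXiv:1805.01504 — 4 statements merged into one kernel-verified Lean document; each statement's English description precedes it below -/
import Mathlib

section
/- (Ehrhart–Macdonald) Let P ⊂ ℝ^n be a full-dimensional lattice polytope. Then there is a polynomial ℰ_P of degree n such that ℰ_P(q) = #(ℤ^n ∩ qP) for every integer q > 0, and this polynomial satisfies ℰ_P(−q) = (−1)^n · #(ℤ^n ∩ int(qP)) for every integer q > 0, where int denotes the topological interior. -/
/-!
The polytope is replaced by the cone over it, generated in `ℝ^n × ℝ` by the vectors
`w i = (v i, 1)` with `v i` running over the lattice points spanning `P`. Lattice points of `qP`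
are the lattice points of height `q` in this cone.

*Half-open decomposition* (`BasisIdx.exists_halfOpen_decomposition`). Choose generic heights
`h i`. Call a basis `B` among the `w i` lower if the linear functional interpolating `h` on `B` is
strictly below `h` at all other `w j`. For a generic point `z` of the cone there is exactly one lower
basis whose simplicial cone contains `z` in its interior: it is the support of the optimal solution
of the linear program minimizing `∑ h i μ i` over `μ ≥ 0`, `∑ μ i w i = z`. Arbitrary points `x` are
handled by perturbation. Fix a generic strictly positive combination `y` of the `w i`. Then `x` lies
in the cone iff `x + ε y` does for all small `ε > 0`, and `x` lies in the interior iff `x - ε y` lies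
in the cone for small `ε > 0`. Hence the cone is the disjoint union of half-open simplicial cones,
where a facet is removed according to the sign of a coordinate of `y`; and passing from `y` to `-y`,
its interior is the disjoint union of the cones with the complementary facets removed.

*Counting in a half-open simplicial cone* (`LatticeFrame.card_cone`). Each lattice point is uniquely
a lattice point `p` of the half-open fundamental parallelepiped plus a nonnegative integer
combination of the `n + 1` generators, so that the count at height `q` is the sum over `p` of
`binom(q - ht p + n, n)`. Because `ht p ≤ n + 1`, this is a polynomial in `q` for all `q ≥ 1`.

*Reciprocity* (`LatticeFrame.poly_eval_neg`). The reflection `p ↦ ∑ w i - p` exchanges the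
parallelepipeds for complementary sets of facets and sends the height `h` to `n + 1 - h`, which is
the reciprocity `binom(-q - h + n, n) = (-1)^n binom(q - (n + 1 - h) + n, n)`.
-/

open scoped Pointwise Classical
open MeasureTheory Polynomial

noncomputable section

/-- The real vector corresponding to an integer vector in `ℤ^n ⊂ ℝ^n`. -/
def intVec {n : ℕ} (m : Fin n → ℤ) : Fin n → ℝ := fun i => (m i : ℝ)

/-- `F` is a face of the polytope `P`: either `P` itself or a nonempty set of maximizers
over `P` of a linear functional. -/
def IsFaceOf {n : ℕ} (P F : Set (Fin n → ℝ)) : Prop :=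
  F = P ∨ (F.Nonempty ∧ ∃ u : (Fin n → ℝ) →ₗ[ℝ] ℝ,
    F = {x | x ∈ P ∧ ∀ p ∈ P, u p ≤ u x})

/-- The dimension of (the affine span of) a face. -/
noncomputable def faceDim {n : ℕ} (F : Set (Fin n → ℝ)) : ℕ :=
  Module.finrank ℝ (affineSpan ℝ F).direction

/-- A polytope `P ⊂ ℝ^n` is simple if every vertex (`0`-dimensional face) lies on
exactly `n` edges (`1`-dimensional faces). -/
def IsSimple {n : ℕ} (P : Set (Fin n → ℝ)) : Prop :=
  ∀ v, IsFaceOf P v → faceDim v = 0 →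
    {E | IsFaceOf P E ∧ faceDim E = 1 ∧ v ⊆ E}.ncard = n

/-! ### Binomial polynomials -/

/-- The polynomial `binom(q - h + n, n) = (q - h + 1) ⋯ (q - h + n) / n!` in the variable `q`. -/
def shiftedBinom (n : ℕ) (h : ℤ) : ℚ[X] :=
  C ((n.factorial : ℚ)⁻¹) * ∏ j ∈ Finset.range n, (X + C ((1 + j - h : ℚ)))

lemma shiftedBinom_eval (n : ℕ) (h : ℤ) (x : ℚ) :
    (shiftedBinom n h).eval x =
      (n.factorial : ℚ)⁻¹ * ∏ j ∈ Finset.range n, (x - h + 1 + j) := by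
  simp only [shiftedBinom, eval_mul, eval_C, eval_prod, eval_add, eval_X]
  congr 1
  exact Finset.prod_congr rfl fun j _ => by ring

lemma shiftedBinom_natDegree_le (n : ℕ) (h : ℤ) : (shiftedBinom n h).natDegree ≤ n := by
  refine (natDegree_C_mul_le _ _).trans ?_
  rw [natDegree_prod_of_monic _ _ fun i _ => monic_X_add_C _]
  simp only [natDegree_X_add_C, Finset.sum_const, Finset.card_range, smul_eq_mul, mul_one, le_refl]

lemma shiftedBinom_coeff (n : ℕ) (h : ℤ) :
    (shiftedBinom n h).coeff n = (n.factorial : ℚ)⁻¹ := by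
  have hm : (∏ j ∈ Finset.range n, (X + C ((1 + j - h : ℚ)))).Monic :=
    monic_prod_of_monic _ _ fun i _ => monic_X_add_C _
  have hd : (∏ j ∈ Finset.range n, (X + C ((1 + j - h : ℚ)))).natDegree = n := by
    rw [natDegree_prod_of_monic _ _ fun i _ => monic_X_add_C _]
    simp only [natDegree_X_add_C, Finset.sum_const, Finset.card_range, smul_eq_mul, mul_one]
  have := hm.coeff_natDegree
  rw [hd] at this
  rw [shiftedBinom, coeff_C_mul, this, mul_one]

/-- Reciprocity for a single binomial polynomial. -/
lemma shiftedBinom_eval_neg (n : ℕ) (h : ℤ) (x : ℚ) :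
    (shiftedBinom n h).eval (-x) = (-1) ^ n * (shiftedBinom n (n + 1 - h)).eval x := by
  rw [shiftedBinom_eval, shiftedBinom_eval, mul_left_comm]
  congr 1
  rw [← Finset.prod_range_reflect]
  have : ((-1 : ℚ)) ^ n = ∏ j ∈ Finset.range n, (-1 : ℚ) := by simp
  rw [this, ← Finset.prod_mul_distrib]
  refine Finset.prod_congr rfl fun j hj => ?_
  have hj' : j + 1 ≤ n := Finset.mem_range.1 hj
  rw [show n - 1 - j = n - (j + 1) by omega, Nat.cast_sub hj']
  push_cast
  ring

/-- `shiftedBinom n h` counts the weak compositions of `q - h` into `n + 1` parts, as long as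
`q - h ≥ -n`; for negative `q - h` in this range both sides vanish. -/
lemma card_compositions {κ : Type*} [Fintype κ] (n : ℕ) (hκ : Fintype.card κ = n + 1)
    (q h : ℤ) (hq : h ≤ q + n) :
    Finite {k : κ → ℕ // ∑ i, (k i : ℤ) = q - h} ∧
    (Nat.card {k : κ → ℕ // ∑ i, (k i : ℤ) = q - h} : ℚ) = (shiftedBinom n h).eval (q : ℚ) := by
  rcases lt_or_ge (q - h) 0 with hneg | hpos
  · have hE : IsEmpty {k : κ → ℕ // ∑ i, (k i : ℤ) = q - h} := by
      refine ⟨fun k => ?_⟩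
      have : 0 ≤ ∑ i, (k.1 i : ℤ) := Finset.sum_nonneg fun i _ => by positivity
      have := k.2
      omega
    refine ⟨inferInstance, ?_⟩
    rw [Nat.card_of_isEmpty, shiftedBinom_eval]
    symm
    rw [Nat.cast_zero, mul_eq_zero]
    right
    have hj : ((h - q - 1).toNat : ℤ) = h - q - 1 := Int.toNat_of_nonneg (by omega)
    refine Finset.prod_eq_zero (i := (h - q - 1).toNat) (Finset.mem_range.2 (by omega)) ?_
    have : (((h - q - 1).toNat : ℤ) : ℚ) = h - q - 1 := by rw [hj]; push_cast; ring
    rw [Int.cast_natCast] at this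
    rw [this]; ring
  · obtain ⟨t, ht⟩ := Int.eq_ofNat_of_zero_le hpos
    have e : Sym κ t ≃ {k : κ → ℕ // ∑ i, (k i : ℤ) = q - h} :=
      (Sym.equivNatSumOfFintype κ t).trans
        (Equiv.subtypeEquivRight fun k => by rw [ht]; norm_cast)
    refine ⟨Finite.of_equiv _ e, ?_⟩
    rw [← Nat.card_congr e, Nat.card_eq_fintype_card, Sym.card_sym_eq_choose, hκ,
      shiftedBinom_eval]
    have h1 : (q : ℚ) - h = t := by exact_mod_cast ht
    rw [h1, show n + 1 + t - 1 = t + n by omega, Nat.choose_symm_add,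
      eq_inv_mul_iff_mul_eq₀ (by positivity)]
    have := Nat.ascFactorial_eq_factorial_mul_choose t n
    rw [Nat.ascFactorial_eq_prod_range] at this
    exact_mod_cast this.symm

/-! ### Lattice points in half-open simplicial cones -/

/-- The half-open orthant: coordinates in `I` are strictly positive, the others nonnegative. -/
def HalfOpen {κ : Type*} (I : κ → Prop) (a : κ → ℝ) : Prop :=
  ∀ i, (I i → 0 < a i) ∧ (¬ I i → 0 ≤ a i)

/-- The half-open unit cube: coordinates in `I` lie in `(0, 1]`, the others in `[0, 1)`. -/
def HalfOpenCube {κ : Type*} (I : κ → Prop) (a : κ → ℝ) : Prop :=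
  ∀ i, (I i → 0 < a i ∧ a i ≤ 1) ∧ (¬ I i → 0 ≤ a i ∧ a i < 1)

/-- The integer part adapted to `(0, 1]` (if `I`) or to `[0, 1)` (otherwise). -/
def intPart (I : Prop) (r : ℝ) : ℤ := if I then ⌈r⌉ - 1 else ⌊r⌋

lemma intPart_eq_iff {I : Prop} {r : ℝ} {k : ℤ} :
    intPart I r = k ↔
      ((I → 0 < r - k ∧ r - k ≤ 1) ∧ (¬ I → 0 ≤ r - k ∧ r - k < 1)) := by
  unfold intPart
  by_cases hI : I
  · simp only [hI, if_true, true_imp_iff, not_true, false_imp_iff, and_true]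
    rw [sub_eq_iff_eq_add, Int.ceil_eq_iff]
    push_cast
    constructor <;> rintro ⟨h1, h2⟩ <;> constructor <;> linarith
  · simp only [hI, if_false, not_false_iff, true_imp_iff, false_imp_iff, true_and]
    rw [Int.floor_eq_iff]
    constructor <;> rintro ⟨h1, h2⟩ <;> constructor <;> linarith

lemma intPart_nonneg {I : Prop} {r : ℝ} (h : (I → 0 < r) ∧ (¬ I → 0 ≤ r)) :
    0 ≤ intPart I r := by
  unfold intPart
  split_ifs with hI
  · have := Int.ceil_pos.2 (h.1 hI); omega
  · exact Int.floor_nonneg.2 (h.2 hI)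

/-- A lattice `Λ` presented in coordinates with respect to a real basis made of lattice vectors
`u i` of height one. -/
structure LatticeFrame (Λ κ : Type*) [AddCommGroup Λ] [Fintype κ] where
  /-- Real coordinates of a lattice vector. -/
  coord : Λ →+ (κ → ℝ)
  coord_inj : Function.Injective coord
  /-- The basis vectors. -/
  u : κ → Λ
  coord_u : ∀ i, coord (u i) = Pi.single i 1
  /-- The height function. -/
  ht : Λ →+ ℤ
  ht_eq : ∀ x, (ht x : ℝ) = ∑ i, coord x i
  finite_box : {x : Λ | ∀ i, 0 ≤ coord x i ∧ coord x i ≤ 1}.Finite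

namespace LatticeFrame
variable {Λ κ : Type*} [AddCommGroup Λ] [Fintype κ] (L : LatticeFrame Λ κ)

lemma coord_sum (k : κ → ℤ) : L.coord (∑ i, k i • L.u i) = fun i => (k i : ℝ) := by
  rw [map_sum]
  ext j
  simp [L.coord_u, Finset.sum_apply, Pi.single_apply]

lemma ht_u (i : κ) : L.ht (L.u i) = 1 := by
  have := L.ht_eq (L.u i)
  rw [L.coord_u] at this
  simp only [Finset.sum_pi_single', Finset.mem_univ, if_true] at this
  exact_mod_cast this

lemma ht_sum (k : κ → ℤ) : L.ht (∑ i, k i • L.u i) = ∑ i, k i := by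
  rw [map_sum]; simp [L.ht_u]

/-- Lattice points of the half-open fundamental parallelepiped. -/
def box (I : κ → Prop) : Set Λ := {x | HalfOpenCube I (L.coord x)}

lemma box_finite (I : κ → Prop) : (L.box I).Finite := by
  refine L.finite_box.subset fun x hx i => ?_
  have := hx i
  by_cases hI : I i
  · exact ⟨(this.1 hI).1.le, (this.1 hI).2⟩
  · exact ⟨(this.2 hI).1, (this.2 hI).2.le⟩

/-- Every lattice point of the half-open cone is uniquely a box point plus a nonnegative integer
combination of the generators. -/
def coneEquiv (I : κ → Prop) (q : ℤ) :
    {x : Λ // L.ht x = q ∧ HalfOpen I (L.coord x)} ≃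
      Σ p : L.box I, {k : κ → ℕ // ∑ i, (k i : ℤ) = q - L.ht p} where
  toFun x := ⟨⟨x.1 - ∑ i, intPart (I i) (L.coord x.1 i) • L.u i, fun i => by
      rw [map_sub, L.coord_sum]
      exact intPart_eq_iff.1 rfl⟩,
    ⟨fun i => (intPart (I i) (L.coord x.1 i)).toNat, by
      simp only [map_sub, L.ht_sum, x.2.1]
      rw [Finset.sum_congr rfl fun i _ => Int.toNat_of_nonneg (intPart_nonneg (x.2.2 i))]
      ring⟩⟩
  invFun p := ⟨p.1.1 + ∑ i, (p.2.1 i : ℤ) • L.u i, by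
      rw [map_add, L.ht_sum, p.2.2]; ring, fun i => by
      rw [map_add, L.coord_sum]
      have h1 := p.1.2 i
      have h2 : (0 : ℝ) ≤ ((p.2.1 i : ℤ) : ℝ) := by positivity
      refine ⟨fun hI => ?_, fun hI => ?_⟩
      · have := (h1.1 hI).1
        simp only [Pi.add_apply]; linarith
      · have := (h1.2 hI).1
        simp only [Pi.add_apply]; linarith⟩
  left_inv x := by
    apply Subtype.ext
    simp only [Int.toNat_of_nonneg (intPart_nonneg (x.2.2 _)), sub_add_cancel]
  right_inv p := by
    obtain ⟨⟨p, hp⟩, ⟨k, hk⟩⟩ := p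
    have key : ∀ i, intPart (I i) (L.coord (p + ∑ i, (k i : ℤ) • L.u i) i) = k i := by
      intro i
      rw [intPart_eq_iff, map_add, L.coord_sum]
      simpa using hp i
    have h1 : p + ∑ i, (k i : ℤ) • L.u i
        - ∑ i, intPart (I i) (L.coord (p + ∑ i, (k i : ℤ) • L.u i) i) • L.u i = p := by
      simp only [key, add_sub_cancel_right]
    refine Sigma.subtype_ext (Subtype.ext h1) ?_
    ext i
    simp only [key i, Int.toNat_natCast]

lemma ht_le_of_mem_box {I : κ → Prop} {p : Λ} (hp : p ∈ L.box I) : L.ht p ≤ Fintype.card κ := by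
  have h : (L.ht p : ℝ) ≤ Fintype.card κ := by
    rw [L.ht_eq]
    calc ∑ i, L.coord p i ≤ ∑ i : κ, (1 : ℝ) := Finset.sum_le_sum fun i _ => by
          by_cases hI : I i
          · exact ((hp i).1 hI).2
          · exact ((hp i).2 hI).2.le
      _ = _ := by simp
  exact_mod_cast h

/-- The counting polynomial of a half-open simplex. -/
def poly (I : κ → Prop) (n : ℕ) : ℚ[X] :=
  ∑ p ∈ (L.box_finite I).toFinset, shiftedBinom n (L.ht p)

lemma card_cone (I : κ → Prop) (n : ℕ) (hκ : Fintype.card κ = n + 1) (q : ℤ) (hq : 0 < q) :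
    Finite {x : Λ // L.ht x = q ∧ HalfOpen I (L.coord x)} ∧
    (Nat.card {x : Λ // L.ht x = q ∧ HalfOpen I (L.coord x)} : ℚ) = (L.poly I n).eval (q : ℚ) := by
  have : Fintype (L.box I) := (L.box_finite I).fintype
  have hc := fun p : L.box I => card_compositions n hκ q (L.ht p) (by
    have := L.ht_le_of_mem_box p.2
    rw [hκ] at this
    push_cast at this
    omega)
  have hf := fun p => (hc p).1
  refine ⟨Finite.of_equiv _ (L.coneEquiv I q).symm, ?_⟩
  rw [Nat.card_congr (L.coneEquiv I q), Nat.card_sigma, poly, eval_finsetSum]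
  push_cast
  rw [Finset.sum_congr rfl fun p _ => (hc p).2]
  rw [← Finset.sum_coe_sort (L.box_finite I).toFinset]
  exact Fintype.sum_equiv (Equiv.subtypeEquivRight fun x => by simp) _ _ fun p => rfl

/-- The point reflection `p ↦ ∑ u i - p` exchanges complementary half-open boxes. -/
lemma reflect_mem_box {I : κ → Prop} {p : Λ} (hp : p ∈ L.box I) :
    ∑ i, L.u i - p ∈ L.box (fun i => ¬ I i) := by
  have h1 : L.coord (∑ i, L.u i) = fun _ => (1 : ℝ) := by
    simpa using L.coord_sum (fun _ => 1)
  intro i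
  have := hp i
  rw [map_sub, h1]
  simp only [Pi.sub_apply, not_not]
  refine ⟨fun hI => ?_, fun hI => ?_⟩
  · have := this.2 hI; constructor <;> linarith
  · have := this.1 hI; constructor <;> linarith

lemma poly_eval_neg (I : κ → Prop) (n : ℕ) (hκ : Fintype.card κ = n + 1) (x : ℚ) :
    (L.poly I n).eval (-x) = (-1) ^ n * (L.poly (fun i => ¬ I i) n).eval x := by
  rw [poly, poly, eval_finsetSum, eval_finsetSum, Finset.mul_sum]
  refine Finset.sum_bij' (fun p _ => ∑ i, L.u i - p) (fun p _ => ∑ i, L.u i - p) ?_ ?_ ?_ ?_ ?_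
  · intro p hp
    rw [Set.Finite.mem_toFinset] at hp ⊢
    exact L.reflect_mem_box hp
  · intro p hp
    rw [Set.Finite.mem_toFinset] at hp ⊢
    simpa using L.reflect_mem_box hp
  · intro p _; abel
  · intro p _; abel
  · intro p _
    have h1 : L.ht (∑ i, L.u i) = n + 1 := by
      have := L.ht_sum (fun _ => 1)
      simp only [one_smul] at this
      rw [this]; simp [hκ]
    rw [shiftedBinom_eval_neg, map_sub, h1]

lemma box_nonempty (I : κ → Prop) : (L.box I).Nonempty := by
  refine ⟨∑ i, (if I i then 1 else 0 : ℤ) • L.u i, fun i => ?_⟩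
  rw [L.coord_sum]
  by_cases hI : I i <;> simp [hI]

lemma poly_natDegree_le (I : κ → Prop) (n : ℕ) : (L.poly I n).natDegree ≤ n :=
  natDegree_sum_le_of_forall_le _ _ fun _ _ => shiftedBinom_natDegree_le _ _

lemma poly_coeff_pos (I : κ → Prop) (n : ℕ) : 0 < (L.poly I n).coeff n := by
  rw [poly, finsetSum_coeff]
  refine Finset.sum_pos (fun p _ => ?_) ?_
  · rw [shiftedBinom_coeff]; positivity
  · rw [Set.Finite.toFinset_nonempty]; exact L.box_nonempty I

end LatticeFrame

/-! ### Small perturbations and generic vectors -/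

section Generic
open Filter Topology

lemma eventually_add_mul_ne_zero (a : ℝ) {b : ℝ} (hb : b ≠ 0) :
    ∀ᶠ ε : ℝ in 𝓝[>] 0, a + ε * b ≠ 0 := by
  have h : ∀ᶠ ε : ℝ in 𝓝[≠] 0, a + ε * b ≠ 0 := by
    by_cases ha : a = 0
    · filter_upwards [self_mem_nhdsWithin] with ε hε
      rw [ha, zero_add]
      exact mul_ne_zero hε hb
    · have hc : Continuous fun ε : ℝ => a + ε * b := by fun_prop
      have : ∀ᶠ ε : ℝ in 𝓝 0, a + ε * b ≠ 0 :=
        hc.continuousAt.eventually_ne (by simpa using ha)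
      exact this.filter_mono nhdsWithin_le_nhds
  exact h.filter_mono (nhdsWithin_mono _ fun x hx => ne_of_gt hx)

lemma eventually_add_mul_pos {a : ℝ} (b : ℝ) (ha : 0 < a) :
    ∀ᶠ ε : ℝ in 𝓝[>] 0, 0 < a + ε * b := by
  have hc : Continuous fun ε : ℝ => a + ε * b := by fun_prop
  have : ∀ᶠ ε : ℝ in 𝓝 0, 0 < a + ε * b :=
    hc.continuousAt.eventually_const_lt (by simpa using ha)
  exact this.filter_mono nhdsWithin_le_nhds

/-- For `b ≠ 0`, positivity of `a + ε b` for small `ε > 0` is a half-open condition on `a`. -/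
lemma eventually_add_mul_pos_iff {a b : ℝ} (hb : b ≠ 0) :
    (∀ᶠ ε : ℝ in 𝓝[>] 0, 0 < a + ε * b) ↔ ((b < 0 → 0 < a) ∧ (¬ b < 0 → 0 ≤ a)) := by
  constructor
  · intro h
    obtain ⟨ε, hε, h0⟩ := (h.and self_mem_nhdsWithin).exists
    have hε0 : (0 : ℝ) < ε := h0
    refine ⟨fun hb' => by nlinarith, fun _ => ?_⟩
    by_contra ha
    push Not at ha
    obtain ⟨δ, h1, h2⟩ := (h.and (eventually_add_mul_pos (-b) (neg_pos.2 ha))).exists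
    linarith
  · rintro ⟨h1, h2⟩
    rcases lt_or_gt_of_ne hb with hb' | hb'
    · exact eventually_add_mul_pos b (h1 hb')
    · have := h2 (not_lt.2 hb'.le)
      filter_upwards [self_mem_nhdsWithin] with ε hε
      have hε0 : (0 : ℝ) < ε := hε
      positivity

/-- Finitely many nonzero linear functionals on `ℝ^ι` are simultaneously nonzero at some strictly
positive vector. -/
lemma exists_pos_generic {ι α : Type*} [Fintype ι] [Finite α] (f : α → Module.Dual ℝ (ι → ℝ))
    (hf : ∀ a, ∃ x, f a x ≠ 0) : ∃ t : ι → ℝ, (∀ i, 0 < t i) ∧ ∀ a, f a t ≠ 0 := by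
  obtain ⟨s, -, hs⟩ := Module.Dual.exists_forall_mem_ne_zero_of_forall_exists ⊤ f
    (fun a => by obtain ⟨x, hx⟩ := hf a; exact ⟨x, trivial, hx⟩)
  have h1 : ∀ᶠ ε : ℝ in 𝓝[>] 0, ∀ a, f a (fun _ => 1) + ε * f a s ≠ 0 :=
    eventually_all.2 fun a => eventually_add_mul_ne_zero _ (hs a)
  have h2 : ∀ᶠ ε : ℝ in 𝓝[>] 0, ∀ i, 0 < 1 + ε * s i :=
    eventually_all.2 fun i => eventually_add_mul_pos _ one_pos
  obtain ⟨ε, h1, h2⟩ := (h1.and h2).exists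
  refine ⟨(fun _ => 1) + ε • s, fun i => by simpa using h2 i, fun a => ?_⟩
  simpa using h1 a

end Generic

/-! ### Half-open regular triangulation of a cone -/

section Triangulation
open Filter Topology

variable {V ι : Type*} [NormedAddCommGroup V] [NormedSpace ℝ V]

/-- The sets of indices `B` for which the vectors `w i`, `i ∈ B`, form a basis of `V`. -/
abbrev BasisIdx (w : ι → V) : Type _ :=
  {B : Finset ι // LinearIndependent ℝ (fun i : B => w i) ∧
    ⊤ ≤ Submodule.span ℝ (Set.range fun i : B => w i)}

namespace BasisIdx
variable {w : ι → V}

/-- The basis of `V` attached to an index set. -/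
def basis (B : BasisIdx w) : Module.Basis B.1 ℝ V := Module.Basis.mk B.2.1 B.2.2

lemma basis_apply (B : BasisIdx w) (i : B.1) : B.basis i = w i := by simp [basis]

/-- Coordinates with respect to the basis attached to an index set. -/
def coord (B : BasisIdx w) (x : V) : B.1 → ℝ := B.basis.repr x

lemma coord_add_smul (B : BasisIdx w) (x y : V) (ε : ℝ) (i : B.1) :
    B.coord (x + ε • y) i = B.coord x i + ε * B.coord y i := by simp [coord]

lemma sum_coord (B : BasisIdx w) (x : V) : ∑ i, B.coord x i • w i = x := by
  conv_rhs => rw [← B.basis.sum_repr x]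
  simp [basis_apply, coord]

lemma coord_w (B : BasisIdx w) (i : B.1) : B.coord (w i) = Pi.single i 1 := by
  ext j
  rw [coord, ← basis_apply B, Module.Basis.repr_self, Finsupp.single_eq_pi_single]

/-- The linear functional on `V` taking the value `h i` on `w i` for `i ∈ B`. -/
def func (B : BasisIdx w) (h : ι → ℝ) : V →ₗ[ℝ] ℝ := B.basis.constr ℝ (fun i : B.1 => h i)

lemma func_eq (B : BasisIdx w) (h : ι → ℝ) (x : V) :
    B.func h x = ∑ i, B.coord x i * h i := by
  simp [func, Module.Basis.constr_apply_fintype, coord]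

lemma func_w (B : BasisIdx w) (h : ι → ℝ) {i : ι} (hi : i ∈ B.1) : B.func h (w i) = h i := by
  have := B.basis.constr_basis ℝ (fun i : B.1 => h i) ⟨i, hi⟩
  rwa [basis_apply] at this

/-- The index sets of the maximal cones of the regular triangulation with heights `h`: the
functional interpolating `h` on `B` lies strictly below `h` elsewhere. -/
def IsLower (h : ι → ℝ) (B : BasisIdx w) : Prop := ∀ j, j ∉ B.1 → B.func h (w j) < h j

/-- For a point `z` interior to the cone on `B`, a lower functional satisfies
`B'.func h z ≤ B.func h z`, with equality only if `B ⊆ B'`. -/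
lemma subset_of_pos {h : ι → ℝ} {B B' : BasisIdx w} (hB' : IsLower h B') {z : V}
    (hz : ∀ i, 0 < B.coord z i) (hle : B.func h z ≤ B'.func h z) : B.1 ⊆ B'.1 := by
  intro j hj
  by_contra hjB'
  have hlt : B'.func h z < B.func h z := by
    conv_lhs => rw [← B.sum_coord z]
    rw [func_eq B, map_sum]
    refine Finset.sum_lt_sum (fun i _ => ?_) ⟨⟨j, hj⟩, Finset.mem_univ _, ?_⟩
    · rw [map_smul, smul_eq_mul]
      refine mul_le_mul_of_nonneg_left ?_ (hz i).le
      by_cases hi : (i : ι) ∈ B'.1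
      · exact (func_w B' h hi).le
      · exact (hB' i hi).le
    · rw [map_smul, smul_eq_mul]
      exact mul_lt_mul_of_pos_left (hB' j hjB') (hz _)
  exact absurd hle (not_le.2 hlt)

/-- Two distinct cones of the regular triangulation have no common interior point. -/
lemma eq_of_pos {h : ι → ℝ} {B B' : BasisIdx w} (hB : IsLower h B) (hB' : IsLower h B') {z : V}
    (hz : ∀ i, 0 < B.coord z i) (hz' : ∀ i, 0 < B'.coord z i) : B = B' := by
  -- whichever functional is smaller at `z`, one inclusion holds; bases have equal cardinality
  have hcard : B.1.card = B'.1.card := by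
    have := B.basis.indexEquiv B'.basis
    simpa using Fintype.card_congr this
  rcases le_total (B.func h z) (B'.func h z) with hle | hle
  · exact Subtype.ext (Finset.eq_of_subset_of_card_le (subset_of_pos hB' hz hle) hcard.ge)
  · exact Subtype.ext
      (Finset.eq_of_subset_of_card_le (subset_of_pos hB hz' hle) hcard.le).symm

variable [Fintype ι]

/-- If a vector outside all hyperplanes spanned by the `w i` lies in the span of the `w i`, `i ∈ s`,
then `s` contains the index set of a basis. -/
lemma exists_subset_of_generic (hspan : Submodule.span ℝ (Set.range w) = ⊤) {z : V}
    (hz : ∀ (B : BasisIdx w) i, B.coord z i ≠ 0) (s : Set ι)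
    (hzs : z ∈ Submodule.span ℝ (w '' s)) : ∃ B : BasisIdx w, (B.1 : Set ι) ⊆ s := by
  obtain ⟨a, has, -, hsa, ha⟩ :=
    exists_linearIndepOn_extension (linearIndepOn_empty ℝ w) (Set.empty_subset s)
  obtain ⟨b, -, hab, hb, hbl⟩ := exists_linearIndepOn_extension ha (Set.subset_univ a)
  have hza : z ∈ Submodule.span ℝ (w '' a) := Submodule.span_le.2 hsa hzs
  have hbf : (b.toFinset : Set ι) = b := by simp
  have hlin : LinearIndependent ℝ (fun i : b.toFinset => w i) := by
    have : LinearIndepOn ℝ w (b.toFinset : Set ι) := by rwa [hbf]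
    exact this
  have htop : ⊤ ≤ Submodule.span ℝ (Set.range fun i : b.toFinset => w i) := by
    have : Set.range (fun i : b.toFinset => w i) = w '' b := by
      ext x; simp
    rw [this, ← hspan, Submodule.span_le, ← Set.image_univ]
    exact hb
  let B : BasisIdx w := ⟨b.toFinset, hlin, htop⟩
  refine ⟨B, fun i hi => has ?_⟩
  by_contra hia
  refine hz B ⟨i, hi⟩ ?_
  have : Submodule.span ℝ (w '' a) ≤ LinearMap.ker (B.basis.coord ⟨i, hi⟩) := by
    rw [Submodule.span_le]
    rintro _ ⟨j, hj, rfl⟩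
    have hjb : j ∈ B.1 := by simpa [B] using hab hj
    have hne : (⟨j, hjb⟩ : B.1) ≠ ⟨i, hi⟩ := fun h => hia (by cases h; exact hj)
    have := congrFun (B.coord_w ⟨j, hjb⟩) ⟨i, hi⟩
    rw [Pi.single_eq_of_ne hne.symm] at this
    exact this
  exact this hza

/-- The cones of the regular triangulation cover all generic points: an optimal solution of the
linear program minimize `∑ h i μ i` subject to `∑ μ i w i = z`, `μ ≥ 0` is supported on a lower
basis. -/
lemma exists_lower_pos (hspan : Submodule.span ℝ (Set.range w) = ⊤)
    (ht : V →ₗ[ℝ] ℝ) (hht : ∀ i, ht (w i) = 1) {h : ι → ℝ}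
    (hgen : ∀ (B : BasisIdx w) j, j ∉ B.1 → B.func h (w j) ≠ h j) {z : V}
    (hz : ∀ (B : BasisIdx w) i, B.coord z i ≠ 0)
    (hzC : ∃ μ : ι → ℝ, (∀ i, 0 ≤ μ i) ∧ ∑ i, μ i • w i = z) :
    ∃ B : BasisIdx w, IsLower h B ∧ ∀ i, 0 < B.coord z i := by
  set K : Set (ι → ℝ) := {μ | (∀ i, 0 ≤ μ i) ∧ ∑ i, μ i • w i = z} with hK
  have hcomp : IsCompact K := by
    have hclosed : IsClosed K := by
      refine IsClosed.inter (s₁ := {μ : ι → ℝ | ∀ i, 0 ≤ μ i})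
        (s₂ := {μ : ι → ℝ | ∑ i, μ i • w i = z}) ?_ ?_
      · simp only [Set.ofPred_forall]
        exact isClosed_iInter fun i => isClosed_le continuous_const (continuous_apply i)
      · exact isClosed_eq (by fun_prop) continuous_const
    refine (isCompact_Icc (a := (0 : ι → ℝ)) (b := fun _ => ht z)).of_isClosed_subset hclosed ?_
    rintro μ ⟨h0, h1⟩
    refine ⟨h0, fun i => ?_⟩
    have : ht z = ∑ i, μ i := by rw [← h1]; simp [hht]
    rw [this]
    exact Finset.single_le_sum (fun i _ => h0 i) (Finset.mem_univ i)
  have hcont : Continuous fun μ : ι → ℝ => ∑ i, h i * μ i := by fun_prop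
  obtain ⟨l, ⟨hl0, hlz⟩, hmin⟩ := hcomp.exists_isMinOn hzC hcont.continuousOn
  obtain ⟨B, hBs⟩ := exists_subset_of_generic hspan hz {i | 0 < l i} (by
    rw [← hlz]
    refine Submodule.sum_mem _ fun i _ => ?_
    rcases (hl0 i).eq_or_lt with h0 | h0
    · rw [← h0, zero_smul]; exact Submodule.zero_mem _
    · exact Submodule.smul_mem _ _ (Submodule.subset_span ⟨i, h0, rfl⟩))
  -- the direction `e j = δ_j - ∑_{i ∈ B} (coordinate of w j) δ_i` of the solution space
  let e : ι → ι → ℝ := fun j i =>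
    (if i = j then 1 else 0) - (if hi : i ∈ B.1 then B.coord (w j) ⟨i, hi⟩ else 0)
  have hsum : ∀ (j : ι) (g : ι → ℝ),
      ∑ i, g i * (if hi : i ∈ B.1 then B.coord (w j) ⟨i, hi⟩ else 0) = B.func g (w j) := by
    intro j g
    rw [func_eq, ← Finset.sum_subset (Finset.subset_univ B.1)]
    · rw [← Finset.sum_coe_sort]
      exact Finset.sum_congr rfl fun i _ => by rw [dif_pos i.2, mul_comm]
    · intro i _ hi; rw [dif_neg hi, mul_zero]
  have hew : ∀ j, ∑ i, e j i • w i = 0 := by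
    intro j
    simp only [e, sub_smul, Finset.sum_sub_distrib, ite_smul, one_smul, zero_smul,
      Finset.sum_ite_eq', Finset.mem_univ, if_true, sub_eq_zero]
    conv_lhs => rw [← B.sum_coord (w j)]
    rw [← Finset.sum_subset (Finset.subset_univ B.1)]
    · rw [← Finset.sum_coe_sort B.1]
      exact Finset.sum_congr rfl fun i _ => by rw [dif_pos i.2]
    · intro i _ hi; rw [dif_neg hi, zero_smul]
  have heh : ∀ j, ∑ i, h i * e j i = h j - B.func h (w j) := by
    intro j
    simp only [e, mul_sub, Finset.sum_sub_distrib, hsum]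
    simp
  -- moving from the minimizer along a feasible direction does not decrease the objective
  have hmove : ∀ (j : ι) (σ : ℝ), (∀ i, 0 < l i ∨ 0 ≤ σ * e j i) →
      0 ≤ σ * (h j - B.func h (w j)) := by
    intro j σ hσ
    have hev : ∀ᶠ ε : ℝ in 𝓝[>] 0, ∀ i, 0 ≤ l i + ε * (σ * e j i) := by
      refine eventually_all.2 fun i => ?_
      rcases hσ i with hi | hi
      · exact (eventually_add_mul_pos _ hi).mono fun _ h => h.le
      · filter_upwards [self_mem_nhdsWithin] with ε hε
        exact add_nonneg (hl0 i) (mul_nonneg (le_of_lt hε) hi)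
    obtain ⟨ε, hε, hε0⟩ := (hev.and self_mem_nhdsWithin).exists
    have hmem : (fun i => l i + ε * (σ * e j i)) ∈ K := by
      refine ⟨hε, ?_⟩
      simp only [add_smul, Finset.sum_add_distrib, hlz, mul_smul, ← Finset.smul_sum, hew,
        smul_zero, add_zero]
    have := hmin hmem
    simp only [Set.mem_ofPred_eq, mul_add, Finset.sum_add_distrib] at this
    have h2 : ∑ i, h i * (ε * (σ * e j i)) = ε * (σ * (h j - B.func h (w j))) := by
      rw [← heh, Finset.mul_sum, Finset.mul_sum]
      exact Finset.sum_congr rfl fun i _ => by ring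
    rw [h2] at this
    have hε0' : (0 : ℝ) < ε := hε0
    by_contra hneg
    push Not at hneg
    nlinarith
  have hlow : IsLower h B := by
    intro j hj
    have := hmove j 1 fun i => by
      by_cases hi : i ∈ B.1
      · exact Or.inl (hBs hi)
      · right
        simp only [e, dif_neg hi, sub_zero, one_mul]
        split_ifs <;> norm_num
    have hne := hgen B j hj
    exact lt_of_le_of_ne (by linarith) hne
  have hsupp : ∀ j, j ∉ B.1 → l j = 0 := by
    intro j hj
    by_contra hlj
    have hlj' : 0 < l j := lt_of_le_of_ne (hl0 j) (Ne.symm hlj)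
    have := hmove j (-1) fun i => by
      by_cases hi : i ∈ B.1
      · exact Or.inl (hBs hi)
      · by_cases hij : i = j
        · exact Or.inl (hij ▸ hlj')
        · right; simp [e, dif_neg hi, hij]
    have := hlow j hj
    linarith
  refine ⟨B, hlow, fun i => ?_⟩
  have : B.coord z i = l i := by
    have hz' : z = ∑ k : B.1, l k • B.basis k := by
      rw [← hlz, ← Finset.sum_subset (Finset.subset_univ B.1), ← Finset.sum_coe_sort B.1]
      · exact Finset.sum_congr rfl fun i _ => by rw [basis_apply]
      · intro i _ hi; rw [hsupp i hi, zero_smul]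
    rw [coord, hz', Module.Basis.repr_sum_self]
  rw [this]
  exact hBs i.2

lemma halfOpen_iff {y : V} (hy : ∀ (B : BasisIdx w) i, B.coord y i ≠ 0) (B : BasisIdx w) (x : V) :
    HalfOpen (fun i => B.coord y i < 0) (B.coord x) ↔
      ∀ᶠ ε : ℝ in 𝓝[>] 0, ∀ i, 0 < B.coord (x + ε • y) i := by
  simp only [coord_add_smul, eventually_all]
  exact forall_congr' fun i => (eventually_add_mul_pos_iff (hy B i)).symm

/-- If `x + ε y` lies in the cone for all small `ε > 0`, with `y` generic, then `x` lies in exactly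
one of the half-open cones determined by `y`. -/
lemma existsUnique_halfOpen (hspan : Submodule.span ℝ (Set.range w) = ⊤)
    (ht : V →ₗ[ℝ] ℝ) (hht : ∀ i, ht (w i) = 1) {h : ι → ℝ}
    (hgen : ∀ (B : BasisIdx w) j, j ∉ B.1 → B.func h (w j) ≠ h j) {y : V}
    (hy : ∀ (B : BasisIdx w) i, B.coord y i ≠ 0) {x : V}
    (hx : ∀ᶠ ε : ℝ in 𝓝[>] 0, ∃ μ : ι → ℝ, (∀ i, 0 ≤ μ i) ∧ ∑ i, μ i • w i = x + ε • y) :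
    ∃! B : BasisIdx w, IsLower h B ∧ HalfOpen (fun i => B.coord y i < 0) (B.coord x) := by
  refine existsUnique_of_exists_of_unique ?_ ?_
  · by_contra hno
    push Not at hno
    have h1 : ∀ᶠ ε : ℝ in 𝓝[>] 0, ∀ (B : BasisIdx w) i, B.coord (x + ε • y) i ≠ 0 := by
      refine eventually_all.2 fun B => eventually_all.2 fun i => ?_
      simp only [coord_add_smul]
      exact eventually_add_mul_ne_zero _ (hy B i)
    have h2 : ∀ᶠ ε : ℝ in 𝓝[>] 0, ∃ B : BasisIdx w, IsLower h B ∧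
        ∀ i, 0 < B.coord (x + ε • y) i := by
      filter_upwards [h1, hx] with ε h1 hx
      exact exists_lower_pos hspan ht hht hgen h1 hx
    have h3 : ∀ᶠ ε : ℝ in 𝓝[>] 0, ∀ (B : BasisIdx w), IsLower h B →
        ¬ ∀ i, 0 < B.coord (x + ε • y) i := by
      refine eventually_all.2 fun B => ?_
      by_cases hB : IsLower h B
      · have hn := hno B hB
        have : ∃ i, ¬ ((B.coord y i < 0 → 0 < B.coord x i) ∧
            (¬ B.coord y i < 0 → 0 ≤ B.coord x i)) := by
          by_contra hc
          push Not at hc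
          exact hn fun i => ⟨(hc i).1, fun h => (hc i).2 (not_lt.1 h)⟩
        obtain ⟨i, hi⟩ := this
        have hneg : ∀ᶠ ε : ℝ in 𝓝[>] 0, 0 < -B.coord x i + ε * (-B.coord y i) := by
          rw [eventually_add_mul_pos_iff (neg_ne_zero.2 (hy B i))]
          rcases lt_or_gt_of_ne (hy B i) with hb | hb
          · refine ⟨fun h => by linarith, fun _ => ?_⟩
            by_contra hc
            exact hi ⟨fun _ => by linarith, fun h => absurd hb h⟩
          · refine ⟨fun _ => ?_, fun h => by linarith⟩
            by_contra hc
            exact hi ⟨fun h => by linarith, fun _ => by linarith⟩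
        filter_upwards [hneg] with ε hε _ hall
        have := hall i
        rw [coord_add_smul] at this
        linarith
      · exact Eventually.of_forall fun _ h => absurd h hB
    obtain ⟨ε, ⟨B, hB, hpos⟩, h3⟩ := (h2.and h3).exists
    exact h3 B hB hpos
  · rintro B B' ⟨hB, hB1⟩ ⟨hB', hB1'⟩
    rw [halfOpen_iff hy] at hB1 hB1'
    obtain ⟨ε, h1, h2⟩ := (hB1.and hB1').exists
    exact eq_of_pos hB hB' h1 h2

lemma exists_nonneg_of_coord_nonneg (B : BasisIdx w) {x : V} (hx : ∀ i, 0 ≤ B.coord x i) :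
    ∃ μ : ι → ℝ, (∀ i, 0 ≤ μ i) ∧ ∑ i, μ i • w i = x := by
  refine ⟨fun i => if hi : i ∈ B.1 then B.coord x ⟨i, hi⟩ else 0, fun i => ?_, ?_⟩
  · dsimp only
    split_ifs
    exacts [hx _, le_rfl]
  · conv_rhs => rw [← B.sum_coord x]
    rw [← Finset.sum_subset (Finset.subset_univ B.1)]
    · rw [← Finset.sum_coe_sort B.1]
      exact Finset.sum_congr rfl fun i _ => by simp only [dif_pos i.2]
    · intro i _ hi; simp only [dif_neg hi, zero_smul]

/-- The cone over the `w i` is a disjoint union of half-open simplicial cones, and the set of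
strictly positive combinations of the `w i` (the interior of the cone) is the disjoint union of the
complementary half-open cones. -/
theorem exists_halfOpen_decomposition (hspan : Submodule.span ℝ (Set.range w) = ⊤)
    (ht : V →ₗ[ℝ] ℝ) (hht : ∀ i, ht (w i) = 1) :
    ∃ (T : Set (BasisIdx w)) (I : (B : BasisIdx w) → B.1 → Prop), T.Nonempty ∧
      (∀ x, (∃ μ : ι → ℝ, (∀ i, 0 ≤ μ i) ∧ ∑ i, μ i • w i = x) →
        ∃! B, B ∈ T ∧ HalfOpen (I B) (B.coord x)) ∧
      (∀ x, ∀ B ∈ T, HalfOpen (I B) (B.coord x) →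
        ∃ μ : ι → ℝ, (∀ i, 0 ≤ μ i) ∧ ∑ i, μ i • w i = x) ∧
      (∀ x, (∃ μ : ι → ℝ, (∀ i, 0 < μ i) ∧ ∑ i, μ i • w i = x) →
        ∃! B, B ∈ T ∧ HalfOpen (fun i => ¬ I B i) (B.coord x)) ∧
      (∀ x, ∀ B ∈ T, HalfOpen (fun i => ¬ I B i) (B.coord x) →
        ∃ μ : ι → ℝ, (∀ i, 0 < μ i) ∧ ∑ i, μ i • w i = x) := by
  obtain ⟨h, -, hgen⟩ := exists_pos_generic
    (α := Σ B : BasisIdx w, {j : ι // j ∉ B.1})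
    (fun a => LinearMap.proj a.2.1 -
      ∑ i : a.1.1, a.1.coord (w a.2.1) i • LinearMap.proj (i : ι)) (fun a => by
      refine ⟨Pi.single a.2.1 1, ?_⟩
      have : ∀ i : a.1.1, (i : ι) ≠ a.2.1 := fun i hi => a.2.2 (hi ▸ i.2)
      simp [LinearMap.sum_apply, this])
  have hgen' : ∀ (B : BasisIdx w) j, j ∉ B.1 → B.func h (w j) ≠ h j := by
    intro B j hj heq
    refine hgen ⟨B, ⟨j, hj⟩⟩ ?_
    simp only [LinearMap.sub_apply, LinearMap.sum_apply, LinearMap.smul_apply,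
      LinearMap.proj_apply, smul_eq_mul]
    rw [← func_eq, heq, sub_self]
  obtain ⟨t, htpos, htgen⟩ := exists_pos_generic
    (α := Σ B : BasisIdx w, B.1)
    (fun a => (a.1.basis.coord a.2).comp (Fintype.linearCombination ℝ w)) (fun a => by
      refine ⟨Pi.single (a.2 : ι) 1, ?_⟩
      have := congrFun (a.1.coord_w a.2) a.2
      rw [Pi.single_eq_same] at this
      simp only [LinearMap.comp_apply, Fintype.linearCombination_apply_single, one_smul]
      exact ne_of_eq_of_ne this one_ne_zero)
  set y : V := ∑ i, t i • w i with hydef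
  have hy : ∀ (B : BasisIdx w) i, B.coord y i ≠ 0 := fun B i => htgen ⟨B, i⟩
  have hy' : ∀ (B : BasisIdx w) i, B.coord (-y) i ≠ 0 := fun B i => by
    have := hy B i
    simpa [coord] using this
  have hneg : ∀ (B : BasisIdx w), (fun i => ¬ B.coord y i < 0) = fun i => B.coord (-y) i < 0 := by
    intro B
    ext i
    have h1 := hy B i
    have h2 : B.coord (-y) i = - B.coord y i := by simp [coord]
    rw [h2, not_lt, neg_lt_zero]
    exact ⟨fun h => lt_of_le_of_ne h h1.symm, le_of_lt⟩
  have hadd : ∀ x, (∃ μ : ι → ℝ, (∀ i, 0 ≤ μ i) ∧ ∑ i, μ i • w i = x) →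
        ∃! B : BasisIdx w, IsLower h B ∧ HalfOpen (fun i => B.coord y i < 0) (B.coord x) := by
    rintro x ⟨μ, hμ, rfl⟩
    refine existsUnique_halfOpen hspan ht hht hgen' hy ?_
    filter_upwards [self_mem_nhdsWithin] with ε hε
    refine ⟨fun i => μ i + ε * t i,
      fun i => add_nonneg (hμ i) (mul_nonneg (le_of_lt hε) (htpos i).le), ?_⟩
    simp only [hydef, add_smul, Finset.sum_add_distrib, mul_smul, ← Finset.smul_sum]
  refine ⟨{B | IsLower h B}, fun B i => B.coord y i < 0, ?_, hadd, ?_, ?_, ?_⟩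
  · obtain ⟨B, hB, -⟩ := (hadd 0 ⟨0, fun _ => le_rfl, by simp⟩).exists
    exact ⟨B, hB⟩
  · intro x B _ hx
    refine B.exists_nonneg_of_coord_nonneg fun i => ?_
    by_cases hi : B.coord y i < 0
    · exact ((hx i).1 hi).le
    · exact (hx i).2 hi
  · rintro x ⟨μ, hμ, rfl⟩
    simp only [hneg]
    refine existsUnique_halfOpen hspan ht hht hgen' hy' ?_
    have : ∀ᶠ ε : ℝ in 𝓝[>] 0, ∀ i, 0 < μ i + ε * (- t i) :=
      eventually_all.2 fun i => eventually_add_mul_pos _ (hμ i)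
    filter_upwards [this] with ε hε
    refine ⟨fun i => μ i + ε * (- t i), fun i => (hε i).le, ?_⟩
    simp only [hydef, add_smul, Finset.sum_add_distrib, mul_smul, ← Finset.smul_sum, neg_smul,
      Finset.sum_neg_distrib]
  · intro x B _ hx
    simp only [hneg] at hx
    rw [halfOpen_iff hy'] at hx
    obtain ⟨ε, hε, hε0⟩ := (hx.and self_mem_nhdsWithin).exists
    obtain ⟨μ, hμ, hsum⟩ := B.exists_nonneg_of_coord_nonneg fun i => (hε i).le
    refine ⟨fun i => μ i + ε * t i,
      fun i => add_pos_of_nonneg_of_pos (hμ i) (mul_pos hε0 (htpos i)), ?_⟩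
    simp only [add_smul, Finset.sum_add_distrib, mul_smul, ← Finset.smul_sum, hsum, ← hydef]
    simp

end BasisIdx
end Triangulation

/-! ### The cone over a lattice polytope -/

section Polytope
open Filter Topology

variable {n : ℕ} {ι : Type*} [Fintype ι]

/-- The vectors `(v i, 1)` generating the cone over the polytope with vertices `v i`. -/
def lift (v : ι → Fin n → ℝ) (i : ι) : (Fin n → ℝ) × ℝ := (v i, 1)

lemma sum_smul_lift (v : ι → Fin n → ℝ) (μ : ι → ℝ) :
    ∑ i, μ i • lift v i = (∑ i, μ i • v i, ∑ i, μ i) := by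
  simp [lift, Prod.ext_iff, Prod.fst_sum, Prod.snd_sum]

lemma mem_convexHull_range_iff (v : ι → Fin n → ℝ) (x : Fin n → ℝ) :
    x ∈ convexHull ℝ (Set.range v) ↔
      ∃ μ : ι → ℝ, (∀ i, 0 ≤ μ i) ∧ ∑ i, μ i = 1 ∧ ∑ i, μ i • v i = x := by
  constructor
  · intro hx
    have hsub : convexHull ℝ (Set.range v) ⊆
        Fintype.linearCombination ℝ v '' stdSimplex ℝ ι := by
      refine convexHull_min ?_ ((convex_stdSimplex ℝ ι).linear_image _)
      rintro _ ⟨i, rfl⟩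
      refine ⟨Pi.single i 1, single_mem_stdSimplex ℝ i, ?_⟩
      simp [Fintype.linearCombination_apply_single]
    obtain ⟨μ, hμ, rfl⟩ := hsub hx
    exact ⟨μ, hμ.1, hμ.2, by rw [Fintype.linearCombination_apply]⟩
  · rintro ⟨μ, h0, h1, h2⟩
    exact mem_convexHull_of_exists_fintype μ v h0 h1 (fun i => ⟨i, rfl⟩) h2

lemma mem_smul_hull_iff (v : ι → Fin n → ℝ) {q : ℝ} (hq : 0 < q) (x : Fin n → ℝ) :
    x ∈ q • convexHull ℝ (Set.range v) ↔
      ∃ μ : ι → ℝ, (∀ i, 0 ≤ μ i) ∧ ∑ i, μ i • lift v i = (x, q) := by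
  simp only [sum_smul_lift, Prod.mk.injEq]
  rw [Set.mem_smul_set_iff_inv_smul_mem₀ hq.ne', mem_convexHull_range_iff]
  constructor
  · rintro ⟨μ, h0, h1, h2⟩
    refine ⟨fun i => q * μ i, fun i => mul_nonneg hq.le (h0 i), ?_, ?_⟩
    · simp only [mul_smul, ← Finset.smul_sum, h2]
      rw [smul_inv_smul₀ hq.ne']
    · rw [← Finset.mul_sum, h1, mul_one]
  · rintro ⟨μ, h0, h1, h2⟩
    refine ⟨fun i => q⁻¹ * μ i, fun i => mul_nonneg (inv_nonneg.2 hq.le) (h0 i), ?_, ?_⟩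
    · rw [← Finset.mul_sum, h2, inv_mul_cancel₀ hq.ne']
    · simp only [mul_smul, ← Finset.smul_sum, h1]

lemma span_lift_eq_top (v : ι → Fin n → ℝ) (hv : affineSpan ℝ (Set.range v) = ⊤) :
    Submodule.span ℝ (Set.range (lift v)) = ⊤ := by
  have h1 : ∀ x : Fin n → ℝ, (x, (1 : ℝ)) ∈ Submodule.span ℝ (Set.range (lift v)) := by
    intro x
    have hx : x ∈ affineSpan ℝ (Set.range v) := by rw [hv]; trivial
    obtain ⟨μ, hμ, hxμ⟩ := eq_affineCombination_of_mem_affineSpan_of_fintype hx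
    rw [Finset.affineCombination_eq_linear_combination _ _ _ hμ] at hxμ
    rw [hxμ, ← hμ, ← sum_smul_lift]
    exact Submodule.sum_mem _ fun i _ => Submodule.smul_mem _ _ (Submodule.subset_span ⟨i, rfl⟩)
  rw [eq_top_iff]
  rintro ⟨x, t⟩ -
  have : (x, t) = (x, (1 : ℝ)) + (t - 1) • ((0 : Fin n → ℝ), (1 : ℝ)) := by simp
  rw [this]
  exact Submodule.add_mem _ (h1 x) (Submodule.smul_mem _ _ (h1 0))

/-- Interior points of a dilated full-dimensional polytope are the strictly positive combinations
of the vertices. -/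
lemma mem_interior_smul_hull_iff (v : ι → Fin n → ℝ) (hv : affineSpan ℝ (Set.range v) = ⊤)
    {q : ℝ} (hq : 0 < q) (x : Fin n → ℝ) :
    x ∈ interior (q • convexHull ℝ (Set.range v)) ↔
      ∃ μ : ι → ℝ, (∀ i, 0 < μ i) ∧ ∑ i, μ i • lift v i = (x, q) := by
  constructor
  · intro hx
    -- shrink `(x, q)` towards the boundary along the sum of all generators
    set y : Fin n → ℝ := ∑ i, v i
    set N : ℝ := ∑ _i : ι, 1
    have hq0 : q - 0 * N ≠ 0 := by simpa using hq.ne'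
    have hc : ContinuousAt (fun ε : ℝ => (q * (q - ε * N)⁻¹) • (x - ε • y)) 0 := by
      have hc1 : ContinuousAt (fun ε : ℝ => q - ε * N) 0 := by fun_prop
      have hc2 : ContinuousAt (fun ε : ℝ => x - ε • y) 0 := by fun_prop
      exact (continuousAt_const.mul (hc1.inv₀ hq0)).smul hc2
    have hev : ∀ᶠ ε : ℝ in 𝓝[>] 0,
        (q * (q - ε * N)⁻¹) • (x - ε • y) ∈ q • convexHull ℝ (Set.range v) := by
      have : ∀ᶠ ε : ℝ in 𝓝 0, (q * (q - ε * N)⁻¹) • (x - ε • y) ∈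
          interior (q • convexHull ℝ (Set.range v)) := by
        refine hc.eventually_mem (isOpen_interior.mem_nhds ?_)
        simpa [hq.ne'] using hx
      exact (this.filter_mono nhdsWithin_le_nhds).mono fun ε h => interior_subset h
    have hpos : ∀ᶠ ε : ℝ in 𝓝[>] 0, 0 < q + ε * (-N) := eventually_add_mul_pos _ hq
    obtain ⟨ε, ⟨h1, h2⟩, h3⟩ := ((hev.and hpos).and self_mem_nhdsWithin).exists
    have h2' : 0 < q - ε * N := by linarith
    have h4 : x - ε • y ∈ (q - ε * N) • convexHull ℝ (Set.range v) := by
      rw [Set.mem_smul_set_iff_inv_smul_mem₀ hq.ne', smul_smul, inv_mul_cancel_left₀ hq.ne'] at h1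
      rwa [Set.mem_smul_set_iff_inv_smul_mem₀ h2'.ne']
    obtain ⟨μ, hμ, hsum⟩ := (mem_smul_hull_iff v h2' _).1 h4
    refine ⟨fun i => μ i + ε, fun i => add_pos_of_nonneg_of_pos (hμ i) h3, ?_⟩
    have hy : ∑ i, lift v i = (y, N) := by
      simpa only [one_smul] using sum_smul_lift v (fun _ => 1)
    simp only [add_smul, Finset.sum_add_distrib, hsum, ← Finset.smul_sum, hy]
    simp
  · rintro ⟨μ, hμ, hsum⟩
    have hsurj : Function.Surjective (Fintype.linearCombination ℝ (lift v)) := by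
      rw [← LinearMap.range_eq_top, Fintype.range_linearCombination]
      exact span_lift_eq_top v hv
    have hopen : IsOpen {μ : ι → ℝ | ∀ i, 0 < μ i} := by
      simp only [Set.ofPred_forall]
      exact isOpen_iInter_of_finite fun i => isOpen_lt continuous_const (continuous_apply i)
    have hU := LinearMap.isOpenMap_of_finiteDimensional _ hsurj _ hopen
    have hU' : IsOpen ((fun x : Fin n → ℝ => (x, q)) ⁻¹'
        (Fintype.linearCombination ℝ (lift v) '' {μ : ι → ℝ | ∀ i, 0 < μ i})) :=
      hU.preimage (by fun_prop)
    refine interior_maximal ?_ hU' ⟨μ, hμ, by rw [Fintype.linearCombination_apply, hsum]⟩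
    rintro z ⟨ν, hν, hz⟩
    rw [Fintype.linearCombination_apply] at hz
    exact (mem_smul_hull_iff v hq z).2 ⟨ν, fun i => (hν i).le, hz⟩

/-- The embedding of the lattice `ℤ^n × ℤ` into `ℝ^n × ℝ`. -/
def latticeEmb (n : ℕ) : (Fin n → ℤ) × ℤ →+ (Fin n → ℝ) × ℝ where
  toFun x := (intVec x.1, x.2)
  map_zero' := by ext <;> simp [intVec]
  map_add' x y := by ext <;> simp [intVec]

/-- The frame of `ℤ^n × ℤ` given by a basis consisting of lifted lattice points. -/
def latticeFrame (s : ι → Fin n → ℤ) (B : BasisIdx (lift fun i => intVec (s i))) :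
    LatticeFrame ((Fin n → ℤ) × ℤ) B.1 where
  coord := (Finsupp.coeFnAddHom.comp
    (B.basis.repr : (Fin n → ℝ) × ℝ →+ (B.1 →₀ ℝ))).comp (latticeEmb n)
  coord_inj := by
    intro x y hxy
    have h1 : latticeEmb n x = latticeEmb n y := B.basis.repr.injective (DFunLike.coe_injective hxy)
    have h2 := congrArg Prod.fst h1
    have h3 := congrArg Prod.snd h1
    refine Prod.ext (funext fun i => ?_) ?_
    · have := congrFun h2 i
      simpa [latticeEmb, intVec] using this
    · simpa [latticeEmb] using h3
  u i := (s i, 1)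
  coord_u i := by
    have : latticeEmb n (s i, 1) = lift (fun i => intVec (s i)) i := by simp [latticeEmb, lift]
    change B.coord (latticeEmb n (s i, 1)) = _
    rw [this, B.coord_w i]
    convert rfl
  ht := AddMonoidHom.snd _ _
  ht_eq x := by
    change ((latticeEmb n x).2 : ℝ) = ∑ i, B.coord (latticeEmb n x) i
    conv_lhs => rw [← B.sum_coord (latticeEmb n x)]
    simp [lift, Prod.snd_sum]
  finite_box := by
    let M : Fin n → ℤ := fun j => ∑ i : B.1, |s i j|
    refine (Set.finite_Icc ((-M, 0) : (Fin n → ℤ) × ℤ) (M, (Fintype.card B.1 : ℤ))).subset ?_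
    intro x hx
    change ∀ i, 0 ≤ B.coord (latticeEmb n x) i ∧ B.coord (latticeEmb n x) i ≤ 1 at hx
    have hsum := B.sum_coord (latticeEmb n x)
    have h2 : (x.2 : ℝ) = ∑ i, B.coord (latticeEmb n x) i := by
      have := congrArg Prod.snd hsum
      simpa [lift, Prod.snd_sum, latticeEmb] using this.symm
    have h1 : ∀ j, (x.1 j : ℝ) = ∑ i, B.coord (latticeEmb n x) i * s i j := by
      intro j
      have := congrFun (congrArg Prod.fst hsum) j
      simpa [lift, Prod.fst_sum, latticeEmb, intVec, Finset.sum_apply] using this.symm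
    have h3 : ∀ j, |(x.1 j : ℝ)| ≤ M j := by
      intro j
      rw [h1 j]
      refine (Finset.abs_sum_le_sum_abs _ _).trans ?_
      simp only [M, Int.cast_sum, Int.cast_abs]
      refine Finset.sum_le_sum fun i _ => ?_
      rw [abs_mul, abs_of_nonneg (hx i).1]
      exact mul_le_of_le_one_left (abs_nonneg _) (hx i).2
    have h4 : ∀ j, |x.1 j| ≤ M j := fun j => by exact_mod_cast h3 j
    refine ⟨⟨fun j => (abs_le.1 (h4 j)).1, ?_⟩, ⟨fun j => (abs_le.1 (h4 j)).2, ?_⟩⟩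
    · have : (0 : ℝ) ≤ x.2 := by rw [h2]; exact Finset.sum_nonneg fun i _ => (hx i).1
      exact_mod_cast this
    · have : (x.2 : ℝ) ≤ Fintype.card B.1 := by
        rw [h2]
        calc _ ≤ ∑ i : B.1, (1 : ℝ) := Finset.sum_le_sum fun i _ => (hx i).2
          _ = _ := by simp
      exact_mod_cast this

lemma card_basisIdx {κ : Type*} (v : κ → Fin n → ℝ) (B : BasisIdx (lift v)) :
    Fintype.card B.1 = n + 1 := by
  have := Module.finrank_eq_card_basis B.basis
  rw [← this]
  simp

/-- Counting a set through a decomposition into finitely many disjoint finite pieces. -/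
lemma card_eq_sum_of_existsUnique {α β : Type*} [Fintype β] {p : α → Prop} {r : β → α → Prop}
    (h : ∀ a, p a → ∃! b, r b a) (h' : ∀ b a, r b a → p a) [∀ b, Finite {a // r b a}] :
    Nat.card {a // p a} = ∑ b, Nat.card {a // r b a} := by
  rw [← Nat.card_sigma]
  refine (Nat.card_congr (Equiv.ofBijective
    (fun x : Σ b, {a // r b a} => (⟨x.2.1, h' _ _ x.2.2⟩ : {a // p a})) ⟨?_, ?_⟩)).symm
  · rintro ⟨b, a, hb⟩ ⟨b', a', hb'⟩ heq
    obtain rfl : a = a' := congrArg Subtype.val heq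
    obtain rfl := (h a (h' _ _ hb)).unique hb hb'
    rfl
  · rintro ⟨a, ha⟩
    obtain ⟨b, hb, -⟩ := h a ha
    exact ⟨⟨b, a, hb⟩, rfl⟩

/-- Lattice points at height `q` in a set that decomposes into half-open cones are counted by the
sum of the associated polynomials. -/
lemma ncard_eq_sum_poly {κ : Type*} (s : κ → Fin n → ℤ)
    (T : Set (BasisIdx (lift fun i => intVec (s i)))) [Fintype T]
    (I : (B : BasisIdx (lift fun i => intVec (s i))) → B.1 → Prop)
    (C : (Fin n → ℝ) × ℝ → Prop)
    (hC : ∀ x, C x → ∃! B, B ∈ T ∧ HalfOpen (I B) (B.coord x))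
    (hC' : ∀ x, ∀ B ∈ T, HalfOpen (I B) (B.coord x) → C x) (q : ℕ) (hq : 0 < q) :
    (({m : Fin n → ℤ | C (intVec m, (q : ℝ))}).ncard : ℚ) =
      ∑ B : T, ((latticeFrame s B.1).poly (I B.1) n).eval (q : ℚ) := by
  have hcone := fun B : T => (latticeFrame s B.1).card_cone (I B.1) n
    (card_basisIdx _ B.1) q (by exact_mod_cast hq)
  have hfin := fun B => (hcone B).1
  have e : {m : Fin n → ℤ | C (intVec m, (q : ℝ))} ≃
      {x : (Fin n → ℤ) × ℤ // x.2 = q ∧ C (latticeEmb n x)} :=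
    { toFun := fun m => ⟨(m.1, q), rfl, m.2⟩
      invFun := fun x => ⟨x.1.1, by
        have := x.2.2
        simpa [latticeEmb, x.2.1] using this⟩
      left_inv := fun m => rfl
      right_inv := fun x => Subtype.ext (Prod.ext rfl x.2.1.symm) }
  have hsum := card_eq_sum_of_existsUnique
    (p := fun x : (Fin n → ℤ) × ℤ => x.2 = q ∧ C (latticeEmb n x))
    (r := fun (B : T) x => (latticeFrame s B.1).ht x = q ∧
      HalfOpen (I B.1) ((latticeFrame s B.1).coord x))
    (by
      rintro x ⟨hx, hxC⟩
      obtain ⟨B, ⟨hBT, hB⟩, huniq⟩ := hC _ hxC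
      exact ⟨⟨B, hBT⟩, ⟨hx, hB⟩, fun B' hB' => Subtype.ext (huniq B'.1 ⟨B'.2, hB'.2⟩)⟩)
    (by
      rintro B x ⟨hx, hB⟩
      exact ⟨hx, hC' _ B.1 B.2 hB⟩)
  rw [← Nat.card_coe_set_eq, Nat.card_congr e, hsum]
  push_cast
  exact Finset.sum_congr rfl fun B _ => by
    have := (hcone B).2
    rw [Int.cast_natCast] at this
    exact this

end Polytope

/-- (Ehrhart–Macdonald.)  Let `P ⊂ ℝ^n` be a full-dimensional lattice
polytope.  Then there is a polynomial `ℰ_P` of degree `n` with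
`ℰ_P(q) = #(ℤ^n ∩ qP)` for all integers `q > 0`, and
`ℰ_P(-q) = (-1)^n #(ℤ^n ∩ int(qP))` for all integers `q > 0`. -/
theorem stmt6 (n : ℕ) (P : Set (Fin n → ℝ))
    (S : Finset (Fin n → ℤ))
    (hP : P = convexHull ℝ (intVec '' (S : Set (Fin n → ℤ))))
    (hfull : affineSpan ℝ P = ⊤) :
    ∃ E : Polynomial ℚ, E.natDegree = n ∧
      (∀ q : ℕ, 0 < q →
        E.eval (q : ℚ) = ({m : Fin n → ℤ | intVec m ∈ (q : ℝ) • P}).ncard) ∧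
      (∀ q : ℕ, 0 < q →
        E.eval (-(q : ℚ)) =
          (-1 : ℚ) ^ n * ({m : Fin n → ℤ | intVec m ∈ interior ((q : ℝ) • P)}).ncard) := by
  let s : S → Fin n → ℤ := fun i => i.1
  let v : S → Fin n → ℝ := fun i => intVec (s i)
  have hrange : Set.range v = intVec '' (S : Set (Fin n → ℤ)) := by
    ext x; simp [v, s]
  have hPv : P = convexHull ℝ (Set.range v) := by rw [hP, hrange]
  have hv : affineSpan ℝ (Set.range v) = ⊤ := by
    rw [← affineSpan_convexHull, ← hPv, hfull]
  obtain ⟨T, I, hTne, h1, h2, h3, h4⟩ := BasisIdx.exists_halfOpen_decomposition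
    (span_lift_eq_top v hv) (LinearMap.snd ℝ (Fin n → ℝ) ℝ) (fun i => rfl)
  have : Fintype T := Fintype.ofFinite T
  have : Nonempty T := hTne.to_subtype
  refine ⟨∑ B : T, (latticeFrame s B.1).poly (I B.1) n, ?_, ?_, ?_⟩
  · refine natDegree_eq_of_le_of_coeff_ne_zero
      (natDegree_sum_le_of_forall_le _ _ fun B _ => LatticeFrame.poly_natDegree_le _ _ _) ?_
    rw [finsetSum_coeff]
    exact (Finset.sum_pos (fun B _ => LatticeFrame.poly_coeff_pos _ _ _)
      Finset.univ_nonempty).ne'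
  · intro q hq
    have hq' : (0 : ℝ) < q := by exact_mod_cast hq
    rw [eval_finsetSum, ← ncard_eq_sum_poly s T I _ h1 h2 q hq]
    simp only [hPv, mem_smul_hull_iff v hq']
  · intro q hq
    have hq' : (0 : ℝ) < q := by exact_mod_cast hq
    rw [eval_finsetSum, Finset.sum_congr rfl fun B _ =>
      LatticeFrame.poly_eval_neg _ _ n (card_basisIdx _ B.1) _, ← Finset.mul_sum,
      ← ncard_eq_sum_poly s T (fun B i => ¬ I B i) _ h3 h4 q hq]
    simp only [hPv, mem_interior_smul_hull_iff v hv hq']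
end
end

section
/- (Dehn–Sommerville) Let P ⊂ ℝ^n be a full-dimensional simple polytope. Let f_k(P) be the number of k-dimensional faces of P (so f_n(P) = 1), and define the h-polynomial h(P,t) = Σ_{k=0}^{n} f_k(P)·(t−1)^k = Σ_{k=0}^{n} h_k(P)·t^k. Then h_k(P) = h_{n−k}(P) for all 0 ≤ k ≤ n. -/
/-! The proof sorts faces by their lowest vertex. Fix a linear functional `l` that is injective on
the finite set `S` spanning `P`.

At a vertex `v`, the edge directions generate the cone of `P` at `v`; as `P` is full-dimensional
and `v` lies on `n` edges, they form a basis of `ℝ^n` (`exists_isVertexFrame`). In the coordinates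
of this basis the faces of `P` through `v` correspond to the subsets `I` of the edge directions,
the face of `I` having dimension `|I|` (`IsVertexFrame.setOf_eq_frameFace`,
`IsVertexFrame.isFaceOf_frameFace`, `IsVertexFrame.faceDim_frameFace`), and `v` is the
`l`-minimum of that face exactly when `l` increases along every direction in `I`.

Every face has a unique `l`-minimal vertex, so `f_k = ∑ v, (up v).choose k`, where `up v` is the
number of edge directions at `v` along which `l` increases (`ncard_faces_eq_sum_choose`). Hence
`h(P, t) = ∑ v, t ^ up v` (`coeff_sum_choose`), i.e. `h_k` counts the vertices with `up v = k`.
Replacing `l` by `-l` replaces `up v` by `n - up v` and leaves `h(P, t)` unchanged, which is the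
claimed symmetry. -/


open scoped Pointwise Classical
open MeasureTheory Polynomial

noncomputable section

section DehnSommerville

variable {n : ℕ}

/-! ### Faces of the convex hull of a finite set -/

/-- A convex combination of `S` at which `u` reaches its maximum `c` over `S` uses only points
of `S` with value `c`. -/
theorem mem_convexHull_filter_eq {S : Finset (Fin n → ℝ)} {u : (Fin n → ℝ) →ₗ[ℝ] ℝ} {c : ℝ}
    (hu : ∀ s ∈ S, u s ≤ c) {x : Fin n → ℝ} (hx : x ∈ convexHull ℝ (S : Set (Fin n → ℝ)))
    (hxc : u x = c) :
    x ∈ convexHull ℝ ((S.filter fun s => u s = c : Finset (Fin n → ℝ)) : Set (Fin n → ℝ)) := by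
  obtain ⟨w, hw0, hw1, rfl⟩ := Finset.mem_convexHull'.1 hx
  have hsum : ∑ s ∈ S, w s * (c - u s) = 0 := by
    simp only [mul_sub, Finset.sum_sub_distrib, ← Finset.sum_mul, hw1]
    rw [map_sum] at hxc
    simp only [map_smul, smul_eq_mul] at hxc
    linarith
  have hz := (Finset.sum_eq_zero_iff_of_nonneg
    (fun s hs => mul_nonneg (hw0 s hs) (sub_nonneg.2 (hu s hs)))).1 hsum
  have hw : ∀ s ∈ S, u s ≠ c → w s = 0 := fun s hs hne =>
    (mul_eq_zero.1 (hz s hs)).resolve_right (sub_ne_zero.2 hne.symm)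
  refine Finset.mem_convexHull'.2 ⟨w, fun s hs => hw0 s (Finset.mem_filter.1 hs).1, ?_, ?_⟩
  · rw [← hw1, Finset.sum_filter_of_ne]
    exact fun s hs h => by_contra fun hne => h (hw s hs hne)
  · rw [Finset.sum_filter_of_ne]
    exact fun s hs h => by_contra fun hne => h (by rw [hw s hs hne, zero_smul])

theorem le_of_mem_convexHull {S : Finset (Fin n → ℝ)} {u : (Fin n → ℝ) →ₗ[ℝ] ℝ} {c : ℝ}
    (hu : ∀ s ∈ S, u s ≤ c) {x : Fin n → ℝ} (hx : x ∈ convexHull ℝ (S : Set (Fin n → ℝ))) :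
    u x ≤ c :=
  convexHull_min (t := {x | u x ≤ c}) (fun s hs => hu s hs) (convex_halfSpace_le u.isLinear c) hx

/-- A normal form for faces: every face of `conv S`, including `conv S` itself (take `u = 0`),
is the set where some functional `u` attains a value `u v` that is maximal on `S`. -/
theorem isFaceOf_convexHull_iff {S : Finset (Fin n → ℝ)} (hS : S.Nonempty)
    {F : Set (Fin n → ℝ)} :
    IsFaceOf (convexHull ℝ (S : Set (Fin n → ℝ))) F ↔
      ∃ u : (Fin n → ℝ) →ₗ[ℝ] ℝ, ∃ v ∈ S, (∀ s ∈ S, u s ≤ u v) ∧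
        F = {x | x ∈ convexHull ℝ (S : Set (Fin n → ℝ)) ∧ u x = u v} := by
  have key : ∀ (u : (Fin n → ℝ) →ₗ[ℝ] ℝ), ∀ v ∈ S, (∀ s ∈ S, u s ≤ u v) →
      {x | x ∈ convexHull ℝ (S : Set (Fin n → ℝ)) ∧
        ∀ p ∈ convexHull ℝ (S : Set (Fin n → ℝ)), u p ≤ u x} =
      {x | x ∈ convexHull ℝ (S : Set (Fin n → ℝ)) ∧ u x = u v} := by
    intro u v hv huv
    ext x
    refine and_congr_right fun hx => ⟨fun h => ?_, fun h p hp => ?_⟩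
    · exact le_antisymm (le_of_mem_convexHull huv hx) (h v (subset_convexHull ℝ _ hv))
    · rw [h]; exact le_of_mem_convexHull huv hp
  constructor
  · rintro (rfl | ⟨-, u, rfl⟩)
    · obtain ⟨v, hv⟩ := hS
      exact ⟨0, v, hv, by simp, by simp⟩
    · obtain ⟨v, hv, huv⟩ := S.exists_max_image u hS
      exact ⟨u, v, hv, huv, key u v hv huv⟩
  · rintro ⟨u, v, hv, huv, rfl⟩
    exact Or.inr ⟨⟨v, subset_convexHull ℝ _ hv, rfl⟩, u, (key u v hv huv).symm⟩

theorem finite_setOf_isFaceOf {S : Finset (Fin n → ℝ)} (hS : S.Nonempty) :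
    {F | IsFaceOf (convexHull ℝ (S : Set (Fin n → ℝ))) F}.Finite := by
  refine (S.powerset.finite_toSet.image
    fun T : Finset (Fin n → ℝ) => convexHull ℝ (T : Set (Fin n → ℝ))).subset ?_
  intro F hF
  obtain ⟨u, v, hv, huv, rfl⟩ := (isFaceOf_convexHull_iff hS).1 hF
  refine ⟨S.filter fun s => u s = u v, Finset.mem_coe.2 (Finset.mem_powerset.2 (Finset.filter_subset _ _)),
    Set.Subset.antisymm ?_ ?_⟩
  · intro x hx
    refine ⟨convexHull_mono (Finset.coe_subset.2 (Finset.filter_subset _ _)) hx, ?_⟩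
    exact convexHull_min (t := {x | u x = u v})
      (fun s hs => (Finset.mem_filter.1 (Finset.mem_coe.1 hs)).2)
      (convex_hyperplane u.isLinear _) hx
  · exact fun x hx => mem_convexHull_filter_eq huv hx.1 hx.2

/-- `v` is the unique maximizer on `S` of some linear functional, i.e. `{v}` is a vertex of
`conv S`. -/
def IsExposedVertex (S : Finset (Fin n → ℝ)) (v : Fin n → ℝ) : Prop :=
  v ∈ S ∧ ∃ u : (Fin n → ℝ) →ₗ[ℝ] ℝ, ∀ s ∈ S, s ≠ v → u s < u v

theorem IsExposedVertex.isFaceOf {S : Finset (Fin n → ℝ)} {v : Fin n → ℝ}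
    (hv : IsExposedVertex S v) : IsFaceOf (convexHull ℝ (S : Set (Fin n → ℝ))) {v} := by
  obtain ⟨hvS, u, hu⟩ := hv
  have hle : ∀ s ∈ S, u s ≤ u v := fun s hs => by
    by_cases h : s = v
    · rw [h]
    · exact (hu s hs h).le
  refine (isFaceOf_convexHull_iff ⟨v, hvS⟩).2 ⟨u, v, hvS, hle, ?_⟩
  refine Set.Subset.antisymm ?_ ?_
  · rintro _ rfl
    exact ⟨subset_convexHull ℝ _ hvS, rfl⟩
  · rintro x ⟨hx, hxv⟩
    have h1 := mem_convexHull_filter_eq hle hx hxv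
    have h2 : (S.filter fun s => u s = u v) = {v} := by
      ext s
      simp only [Finset.mem_filter, Finset.mem_singleton]
      refine ⟨fun h => by_contra fun hne => (hu s h.1 hne).ne h.2, ?_⟩
      rintro rfl
      exact ⟨hvS, rfl⟩
    simpa [h2] using h1

/-! ### The cone at a simple vertex -/

/-- A finite set `D` has a subset `T` with the same convex hull all of whose points are strictly
exposed: each `q ∈ T` is the unique maximizer on `D` of some functional. -/
theorem exists_exposed_generators (D : Finset (Fin n → ℝ)) :
    ∃ T ⊆ D, (D : Set (Fin n → ℝ)) ⊆ convexHull ℝ (T : Set (Fin n → ℝ)) ∧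
      ∀ q ∈ T, ∃ w : (Fin n → ℝ) →ₗ[ℝ] ℝ, ∀ d ∈ D, d ≠ q → w d < w q := by
  obtain ⟨T, hTD, hT, hmin⟩ := exists_minimal_le_of_wellFoundedLT
    (fun T : Finset (Fin n → ℝ) => (D : Set (Fin n → ℝ)) ⊆ convexHull ℝ (T : Set (Fin n → ℝ))) D
    (subset_convexHull ℝ _)
  refine ⟨T, hTD, hT, fun q hq => ?_⟩
  -- By minimality `q` is not in the hull of the other points of `T`, so it can be separated.
  have hnot : q ∉ convexHull ℝ ((T.erase q : Finset _) : Set (Fin n → ℝ)) := by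
    intro hmem
    have hsub : (T : Set (Fin n → ℝ)) ⊆
        convexHull ℝ ((T.erase q : Finset _) : Set (Fin n → ℝ)) := by
      intro t ht
      by_cases h : t = q
      · rwa [h]
      · exact subset_convexHull ℝ _ (Finset.mem_coe.2 (Finset.mem_erase.2 ⟨h, ht⟩))
    have := hmin (hT.trans (convexHull_min hsub (convex_convexHull ℝ _))) (Finset.erase_subset q T)
    exact Finset.notMem_erase q T (this hq)
  obtain ⟨f, r, hf, hr⟩ := geometric_hahn_banach_closed_point (convex_convexHull ℝ _)
    ((T.erase q).finite_toSet.isClosed_convexHull (𝕜 := ℝ)) hnot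
  refine ⟨f.toLinearMap, fun d hd hdq => ?_⟩
  have hlt : ∀ t ∈ T, t ≠ q → f.toLinearMap t < f.toLinearMap q := fun t ht h =>
    (hf t (subset_convexHull ℝ _ (Finset.mem_coe.2 (Finset.mem_erase.2 ⟨h, ht⟩)))).trans hr
  have hle : ∀ t ∈ T, f.toLinearMap t ≤ f.toLinearMap q := fun t ht => by
    by_cases h : t = q
    · rw [h]
    · exact (hlt t ht h).le
  refine lt_of_le_of_ne (le_of_mem_convexHull hle (hT hd)) fun heq => hdq ?_
  have h1 := mem_convexHull_filter_eq hle (hT hd) heq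
  have h2 : (T.filter fun s => f.toLinearMap s = f.toLinearMap q) = {q} := by
    ext s
    simp only [Finset.mem_filter, Finset.mem_singleton]
    refine ⟨fun h => by_contra fun hne => (hlt s h.1 hne).ne h.2, ?_⟩
    rintro rfl
    exact ⟨hq, rfl⟩
  rw [h2] at h1
  simpa using h1

/-- The basis `b` describes the simple cone of `conv S` at `v`: each `b i` points from `v` to
another point of `S`, and `conv S` lies in `v` plus the cone spanned by `b`. -/
structure IsVertexFrame (S : Finset (Fin n → ℝ)) (v : Fin n → ℝ)
    (b : Module.Basis (Fin n) ℝ (Fin n → ℝ)) : Prop where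
  mem : v ∈ S
  add_mem : ∀ i, ∃ c : ℝ, 0 < c ∧ v + c • b i ∈ S
  repr_nonneg : ∀ x ∈ convexHull ℝ (S : Set (Fin n → ℝ)), ∀ i, 0 ≤ b.repr (x - v) i

theorem faceDim_eq_finrank_span {F : Set (Fin n → ℝ)} {v : Fin n → ℝ} (hv : v ∈ F)
    {W : Submodule ℝ (Fin n → ℝ)} (h1 : ∀ x ∈ F, x - v ∈ W)
    (h2 : W ≤ Submodule.span ℝ ((fun x => x - v) '' F)) : faceDim F = Module.finrank ℝ W := by
  have h : vectorSpan ℝ F = W := by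
    rw [vectorSpan_eq_span_vsub_set_right ℝ hv]
    refine le_antisymm (Submodule.span_le.2 ?_) h2
    rintro _ ⟨x, hx, rfl⟩
    exact h1 x hx
  rw [faceDim, direction_affineSpan, h]

/-- At a vertex `v` on at most `n` edges of a full-dimensional polytope, the edge directions form
a basis generating the cone at `v`. The edge directions are found as exposed points of the section
of that cone by the hyperplane `u = -1`, where `u` exposes `v`. -/
theorem exists_isVertexFrame {S : Finset (Fin n → ℝ)} {v : Fin n → ℝ}
    (hv : IsExposedVertex S v)
    (hfull : affineSpan ℝ (convexHull ℝ (S : Set (Fin n → ℝ))) = ⊤)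
    (hedges : {E | IsFaceOf (convexHull ℝ (S : Set (Fin n → ℝ))) E ∧ faceDim E = 1 ∧
      {v} ⊆ E}.ncard ≤ n) :
    ∃ b : Module.Basis (Fin n) ℝ (Fin n → ℝ), IsVertexFrame S v b := by
  obtain ⟨hvS, u, hu⟩ := hv
  have hS : S.Nonempty := ⟨v, hvS⟩
  set d : (Fin n → ℝ) → (Fin n → ℝ) := fun s => (u v - u s)⁻¹ • (s - v) with hd
  have hds : ∀ s ∈ S, s ≠ v → s - v = (u v - u s) • d s := fun s hs h => by
    rw [hd, smul_inv_smul₀ (sub_pos.2 (hu s hs h)).ne']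
  have hud : ∀ s ∈ S, s ≠ v → u (d s) = -1 := fun s hs h => by
    have := (sub_pos.2 (hu s hs h)).ne'
    simp only [hd, map_smul, map_sub, smul_eq_mul]
    field_simp
    ring
  obtain ⟨T, hTD, hDT, hexp⟩ := exists_exposed_generators ((S.erase v).image d)
  choose! w hw using hexp
  have hTs : ∀ q ∈ T, ∃ s ∈ S, s ≠ v ∧ d s = q := fun q hq => by
    obtain ⟨s, hs, h⟩ := Finset.mem_image.1 (hTD hq)
    exact ⟨s, (Finset.mem_erase.1 hs).2, (Finset.mem_erase.1 hs).1, h⟩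
  have hdD : ∀ s ∈ S, s ≠ v → d s ∈ (S.erase v).image d := fun s hs h =>
    Finset.mem_image_of_mem _ (Finset.mem_erase.2 ⟨h, hs⟩)
  -- The functional `g q` vanishes on `q`, and is negative on the other normalized directions.
  set g : (Fin n → ℝ) → (Fin n → ℝ) →ₗ[ℝ] ℝ := fun q => w q + (w q q) • u with hg
  have hgd : ∀ q, ∀ s ∈ S, s ≠ v → g q (s - v) = (u v - u s) * (w q (d s) - w q q) := by
    intro q s hs h
    rw [hds s hs h]
    simp only [hg, map_smul, LinearMap.add_apply, LinearMap.smul_apply, smul_eq_mul, hud s hs h]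
    ring
  have hglt : ∀ q ∈ T, ∀ s ∈ S, s ≠ v → d s ≠ q → g q s < g q v := by
    intro q hq s hs h hne
    have h1 := hgd q s hs h
    have h2 := mul_neg_of_pos_of_neg (sub_pos.2 (hu s hs h))
      (sub_neg.2 (hw q hq _ (hdD s hs h) hne))
    rw [map_sub] at h1
    linarith
  have hgeq : ∀ q, ∀ s ∈ S, s ≠ v → d s = q → g q s = g q v := by
    intro q s hs h he
    have h1 := hgd q s hs h
    rw [map_sub, he, sub_self, mul_zero] at h1
    linarith
  have hgle : ∀ q ∈ T, ∀ s ∈ S, g q s ≤ g q v := by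
    intro q hq s hs
    by_cases h : s = v
    · rw [h]
    by_cases h' : d s = q
    · exact (hgeq q s hs h h').le
    · exact (hglt q hq s hs h h').le
  let E : (Fin n → ℝ) → Set (Fin n → ℝ) := fun q =>
    {x | x ∈ convexHull ℝ (S : Set (Fin n → ℝ)) ∧ g q x = g q v}
  have hE : ∀ q ∈ T, IsFaceOf (convexHull ℝ (S : Set (Fin n → ℝ))) (E q) ∧
      faceDim (E q) = 1 ∧ {v} ⊆ E q := by
    intro q hq
    have hvE : v ∈ E q := ⟨subset_convexHull ℝ _ hvS, rfl⟩
    refine ⟨(isFaceOf_convexHull_iff hS).2 ⟨g q, v, hvS, hgle q hq, rfl⟩, ?_,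
      Set.singleton_subset_iff.2 hvE⟩
    obtain ⟨s, hs, hsv, rfl⟩ := hTs q hq
    have hq0 : d s ≠ 0 := fun h0 => by
      have := hud s hs hsv
      rw [h0, map_zero] at this
      norm_num at this
    rw [faceDim_eq_finrank_span hvE (W := Submodule.span ℝ {d s}), finrank_span_singleton hq0]
    · intro x hx
      have hx' := mem_convexHull_filter_eq (hgle _ hq) hx.1 hx.2
      have hconv : Convex ℝ {x | x - v ∈ Submodule.span ℝ {d s}} := by
        simp only [sub_eq_add_neg]
        exact (Submodule.span ℝ {d s}).convex.translate_preimage_left (-v)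
      refine convexHull_min (fun t ht => ?_) hconv hx'
      obtain ⟨htS, htg⟩ := Finset.mem_filter.1 (Finset.mem_coe.1 ht)
      show t - v ∈ Submodule.span ℝ {d s}
      by_cases htv : t = v
      · rw [htv, sub_self]; exact zero_mem _
      · have : d t = d s := by_contra fun hne => (hglt _ hq t htS htv hne).ne htg
        rw [hds t htS htv, this]
        exact Submodule.smul_mem _ _ (Submodule.mem_span_singleton_self _)
    · rw [Submodule.span_singleton_le_iff_mem]
      refine Submodule.smul_mem _ _ (Submodule.subset_span ⟨s, ⟨subset_convexHull ℝ _ hs, ?_⟩, rfl⟩)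
      exact hgeq _ s hs hsv rfl
  have hinj : Set.InjOn E T := by
    intro q hq q' hq' h
    obtain ⟨s, hs, hsv, rfl⟩ := hTs q hq
    have hsE : s ∈ E (d s) := ⟨subset_convexHull ℝ _ hs, hgeq _ s hs hsv rfl⟩
    rw [h] at hsE
    exact by_contra fun hne => (hglt q' hq' s hs hsv hne).ne hsE.2
  have hcard : T.card ≤ n := by
    rw [← Set.ncard_coe_finset]
    exact (Set.ncard_le_ncard_of_injOn E (fun q hq => hE q hq) hinj
      ((finite_setOf_isFaceOf hS).subset fun F hF => hF.1)).trans hedges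
  have hspan : ⊤ ≤ Submodule.span ℝ (T : Set (Fin n → ℝ)) := by
    have h1 : vectorSpan ℝ (convexHull ℝ (S : Set (Fin n → ℝ))) = ⊤ := by
      rw [← direction_affineSpan, hfull, AffineSubspace.direction_top]
    rw [← h1, ← direction_affineSpan, affineSpan_convexHull, direction_affineSpan,
      vectorSpan_eq_span_vsub_set_right ℝ (Finset.mem_coe.2 hvS), Submodule.span_le]
    rintro _ ⟨s, hs, rfl⟩
    show s - v ∈ Submodule.span ℝ (T : Set (Fin n → ℝ))
    by_cases h : s = v
    · rw [h, sub_self]; exact zero_mem _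
    · rw [hds s hs h]
      exact Submodule.smul_mem _ _
        (convexHull_min Submodule.subset_span (Submodule.convex _) (hDT (hdD s hs h)))
  have hcard' : T.card = n := by
    refine le_antisymm hcard ?_
    have h1 := finrank_span_finset_le_card (R := ℝ) T
    rwa [Set.finrank, top_le_iff.1 hspan, finrank_top, Module.finrank_fin_fun] at h1
  let b := (finsetBasisOfTopLeSpanOfCardEqFinrank hspan
    (by rw [hcard', Module.finrank_fin_fun])).reindex (T.equivFinOfCardEq hcard')
  have hbT : ∀ i, b i ∈ T := fun i => by
    simp [b, finsetBasisOfTopLeSpanOfCardEqFinrank]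
  have hTb : ∀ q ∈ T, ∃ i, b i = q := fun q hq =>
    ⟨T.equivFinOfCardEq hcard' ⟨q, hq⟩, by simp [b, finsetBasisOfTopLeSpanOfCardEqFinrank]⟩
  refine ⟨b, hvS, fun i => ?_, fun x hx i => ?_⟩
  · obtain ⟨s, hs, hsv, h⟩ := hTs _ (hbT i)
    refine ⟨u v - u s, sub_pos.2 (hu s hs hsv), ?_⟩
    rw [← h, ← hds s hs hsv, add_sub_cancel]
    exact hs
  · have hT0 : ∀ y ∈ convexHull ℝ (T : Set (Fin n → ℝ)), 0 ≤ b.coord i y := by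
      refine fun y hy => convexHull_min (t := {y | 0 ≤ b.coord i y}) ?_
        (convex_halfSpace_ge (b.coord i).isLinear 0) hy
      intro q hq
      obtain ⟨j, rfl⟩ := hTb q hq
      simp only [Set.mem_ofPred_eq, Module.Basis.coord_apply, Module.Basis.repr_self]
      by_cases hij : j = i
      · simp [hij]
      · simp [Finsupp.single_eq_of_ne (Ne.symm hij)]
    have hS0 : ∀ s ∈ S, b.coord i v ≤ b.coord i s := by
      intro s hs
      by_cases h : s = v
      · rw [h]
      · have h1 : b.coord i (s - v) = (u v - u s) * b.coord i (d s) := by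
          rw [hds s hs h, map_smul, smul_eq_mul]
        have h2 := mul_nonneg (sub_pos.2 (hu s hs h)).le (hT0 _ (hDT (hdD s hs h)))
        rw [map_sub] at h1
        linarith
    have := convexHull_min (t := {y | b.coord i v ≤ b.coord i y}) hS0
      (convex_halfSpace_ge (b.coord i).isLinear _) hx
    have h3 : b.repr (x - v) i = b.coord i x - b.coord i v := by
      rw [← map_sub, Module.Basis.coord_apply]
    rw [h3]
    exact sub_nonneg.2 this

/-! ### Faces through a simple vertex -/

/-- The points of `conv S` whose coordinates in the frame `b` at `v` are supported on `I`. -/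
def frameFace (S : Finset (Fin n → ℝ)) (v : Fin n → ℝ)
    (b : Module.Basis (Fin n) ℝ (Fin n → ℝ)) (I : Finset (Fin n)) : Set (Fin n → ℝ) :=
  {x | x ∈ convexHull ℝ (S : Set (Fin n → ℝ)) ∧ ∀ i ∉ I, b.repr (x - v) i = 0}

theorem map_sub_eq_sum_repr (b : Module.Basis (Fin n) ℝ (Fin n → ℝ))
    (u : (Fin n → ℝ) →ₗ[ℝ] ℝ) (x v : Fin n → ℝ) :
    u x - u v = ∑ i, b.repr (x - v) i * u (b i) := by
  rw [← map_sub]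
  conv_lhs => rw [← b.sum_repr (x - v)]
  simp only [map_sum, map_smul, smul_eq_mul]

namespace IsVertexFrame

variable {S : Finset (Fin n → ℝ)} {v : Fin n → ℝ} {b : Module.Basis (Fin n) ℝ (Fin n → ℝ)}

theorem mem_frameFace (h : IsVertexFrame S v b) (I : Finset (Fin n)) : v ∈ frameFace S v b I :=
  ⟨subset_convexHull ℝ _ h.mem, by simp⟩

theorem add_smul_mem_frameFace_iff {I : Finset (Fin n)} {i : Fin n} {c : ℝ}
    (hc : 0 < c) (hmem : v + c • b i ∈ S) : v + c • b i ∈ frameFace S v b I ↔ i ∈ I := by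
  constructor
  · intro hx
    by_contra hi
    have := hx.2 i hi
    simp [hc.ne'] at this
  · refine fun hi => ⟨subset_convexHull ℝ _ hmem, fun j hj => ?_⟩
    have hji : j ≠ i := fun e => hj (e ▸ hi)
    simp [Finsupp.single_eq_of_ne hji]

/-- A face through `v` is cut out by those frame directions on which its functional vanishes. -/
theorem setOf_eq_frameFace (h : IsVertexFrame S v b) {u : (Fin n → ℝ) →ₗ[ℝ] ℝ}
    (hu : ∀ s ∈ S, u s ≤ u v) {I : Finset (Fin n)} (hI : ∀ i, i ∈ I ↔ u (b i) = 0) :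
    {x | x ∈ convexHull ℝ (S : Set (Fin n → ℝ)) ∧ u x = u v} = frameFace S v b I := by
  have hub : ∀ i, u (b i) ≤ 0 := fun i => by
    obtain ⟨c, hc, hmem⟩ := h.add_mem i
    have := hu _ hmem
    rw [map_add, map_smul, smul_eq_mul] at this
    nlinarith
  ext x
  refine and_congr_right fun hx => ?_
  rw [← sub_eq_zero, map_sub_eq_sum_repr b, Finset.sum_eq_zero_iff_of_nonpos
    fun i _ => mul_nonpos_of_nonneg_of_nonpos (h.repr_nonneg x hx i) (hub i)]
  simp only [Finset.mem_univ, true_imp_iff, mul_eq_zero, hI]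
  exact forall_congr' fun i => or_iff_not_imp_right

theorem isFaceOf_frameFace (h : IsVertexFrame S v b) (I : Finset (Fin n)) :
    IsFaceOf (convexHull ℝ (S : Set (Fin n → ℝ))) (frameFace S v b I) := by
  set u : (Fin n → ℝ) →ₗ[ℝ] ℝ := -∑ i ∈ Iᶜ, b.coord i with hu
  have hub : ∀ j, u (b j) = if j ∈ I then 0 else -1 := fun j => by
    simp only [hu, LinearMap.neg_apply, LinearMap.sum_apply, Module.Basis.coord_apply,
      Module.Basis.repr_self, Finsupp.single_apply]
    by_cases hj : j ∈ I <;> simp [hj]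
  have hle : ∀ s ∈ S, u s ≤ u v := fun s hs => by
    rw [← sub_nonpos, map_sub_eq_sum_repr b]
    refine Finset.sum_nonpos fun i _ => mul_nonpos_of_nonneg_of_nonpos
      (h.repr_nonneg s (subset_convexHull ℝ _ hs) i) ?_
    rw [hub]
    split_ifs <;> norm_num
  refine (isFaceOf_convexHull_iff ⟨v, h.mem⟩).2 ⟨u, v, h.mem, hle, ?_⟩
  refine (h.setOf_eq_frameFace hle fun i => ?_).symm
  rw [hub]
  by_cases hi : i ∈ I <;> simp [hi]

theorem faceDim_frameFace (h : IsVertexFrame S v b) (I : Finset (Fin n)) :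
    faceDim (frameFace S v b I) = I.card := by
  rw [faceDim_eq_finrank_span (h.mem_frameFace I)
    (W := Submodule.span ℝ (Set.range fun i : I => b i))]
  · exact (finrank_span_eq_card (b.linearIndependent.comp _ Subtype.val_injective)).trans
      (Fintype.card_coe I)
  · intro x hx
    rw [← b.sum_repr (x - v)]
    refine Submodule.sum_mem _ fun i _ => ?_
    by_cases hi : i ∈ I
    · exact Submodule.smul_mem _ _ (Submodule.subset_span ⟨⟨i, hi⟩, rfl⟩)
    · rw [hx.2 i hi, zero_smul]; exact zero_mem _
  · rw [Submodule.span_le]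
    rintro _ ⟨⟨i, hi⟩, rfl⟩
    obtain ⟨c, hc, hmem⟩ := h.add_mem i
    have h1 : c • b i ∈ Submodule.span ℝ ((fun x => x - v) '' frameFace S v b I) :=
      Submodule.subset_span ⟨_, (add_smul_mem_frameFace_iff hc hmem).2 hi, by simp⟩
    exact (Submodule.smul_mem_iff _ hc.ne').1 h1

/-- If `l` increases along all directions in `I`, then `v` is the strict minimum of `l` on the face. -/
theorem lt_of_mem_frameFace (h : IsVertexFrame S v b) {l : (Fin n → ℝ) →ₗ[ℝ] ℝ}
    {I : Finset (Fin n)} (hI : ∀ i ∈ I, 0 < l (b i)) {x : Fin n → ℝ}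
    (hx : x ∈ frameFace S v b I) (hne : x ≠ v) : l v < l x := by
  have hterm : ∀ i ∈ Finset.univ, 0 ≤ b.repr (x - v) i * l (b i) := fun i _ => by
    by_cases hi : i ∈ I
    · exact mul_nonneg (h.repr_nonneg x hx.1 i) (hI i hi).le
    · rw [hx.2 i hi, zero_mul]
  rw [← sub_pos, map_sub_eq_sum_repr b]
  refine lt_of_le_of_ne (Finset.sum_nonneg hterm) fun h0 => hne (sub_eq_zero.1 ?_)
  have hz := (Finset.sum_eq_zero_iff_of_nonneg hterm).1 h0.symm
  rw [← b.sum_repr (x - v)]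
  refine Finset.sum_eq_zero fun i hi => ?_
  by_cases hiI : i ∈ I
  · rw [(mul_eq_zero.1 (hz i hi)).resolve_right (hI i hiI).ne', zero_smul]
  · rw [hx.2 i hiI, zero_smul]

end IsVertexFrame

/-! ### Counting faces by their lowest vertex -/

/-- The point of `S` at which a generic `l` is minimal on a given face is a vertex of `conv S`:
it is exposed by `u - ε l` for small `ε > 0`, where `u` defines the face. -/
theorem exists_isExposedVertex {S : Finset (Fin n → ℝ)} {u l : (Fin n → ℝ) →ₗ[ℝ] ℝ}
    (hl : Set.InjOn l S) {v : Fin n → ℝ} (hv : v ∈ S) (hu : ∀ s ∈ S, u s ≤ u v) :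
    ∃ p, IsExposedVertex S p ∧ u p = u v ∧ ∀ s ∈ S, u s = u v → l p ≤ l s := by
  obtain ⟨p, hp, hmin⟩ := (S.filter fun s => u s = u v).exists_min_image l
    ⟨v, Finset.mem_filter.2 ⟨hv, rfl⟩⟩
  obtain ⟨hpS, hpu⟩ := Finset.mem_filter.1 hp
  have hmin' : ∀ s ∈ S, u s = u v → l p ≤ l s := fun s hs h =>
    hmin s (Finset.mem_filter.2 ⟨hs, h⟩)
  refine ⟨p, ⟨hpS, ?_⟩, hpu, hmin'⟩
  have hev : ∀ᶠ e : ℝ in nhdsWithin 0 (Set.Ioi 0),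
      ∀ s ∈ S, s ≠ p → u s - e * l s < u p - e * l p := by
    refine (Filter.eventually_all_finset S).2 fun s hs => ?_
    by_cases hsp : s = p
    · exact Filter.Eventually.of_forall fun e h => absurd hsp h
    by_cases hsu : u s = u v
    · have hlt : l p < l s := lt_of_le_of_ne (hmin' s hs hsu) fun h => hsp (hl hs hpS h.symm)
      filter_upwards [self_mem_nhdsWithin] with e he _
      have := mul_lt_mul_of_pos_left hlt (Set.mem_Ioi.1 he)
      linarith
    · have hlt : u s < u p := hpu ▸ lt_of_le_of_ne (hu s hs) hsu
      have hc : ContinuousAt (fun e : ℝ => (u p - e * l p) - (u s - e * l s)) 0 := by fun_prop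
      have := hc.eventually_const_lt (u := 0) (by simpa using hlt)
      filter_upwards [nhdsWithin_le_nhds this] with e he _
      linarith
  obtain ⟨e, he⟩ := hev.exists
  exact ⟨u - e • l, fun s hs hsp => by simpa using he s hs hsp⟩

/-- Sorting the `k`-faces by their `l`-minimal vertex: such faces with minimal vertex `v`
correspond to `k`-subsets of the frame directions at `v` along which `l` increases. -/
theorem ncard_faces_eq_sum_choose {S : Finset (Fin n → ℝ)} (hS : S.Nonempty)
    (b : (Fin n → ℝ) → Module.Basis (Fin n) ℝ (Fin n → ℝ))
    (hb : ∀ v, IsExposedVertex S v → IsVertexFrame S v (b v))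
    {l : (Fin n → ℝ) →ₗ[ℝ] ℝ} (hl : Set.InjOn l S) (k : ℕ) :
    {F | IsFaceOf (convexHull ℝ (S : Set (Fin n → ℝ))) F ∧ faceDim F = k}.ncard =
      ∑ v ∈ S.filter (IsExposedVertex S),
        (Finset.univ.filter fun i => 0 < l (b v i)).card.choose k := by
  set up : (Fin n → ℝ) → Finset (Fin n) := fun v => Finset.univ.filter fun i => 0 < l (b v i)
    with hup
  set A := (S.filter (IsExposedVertex S)).sigma fun v => (up v).powersetCard k with hA
  have hcard : A.card = ∑ v ∈ S.filter (IsExposedVertex S), (up v).card.choose k := by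
    simp [hA, Finset.card_sigma, Finset.card_powersetCard]
  have hmemA : ∀ p, p ∈ A ↔ IsExposedVertex S p.1 ∧ p.2 ⊆ up p.1 ∧ p.2.card = k := fun p => by
    simp only [hA, Finset.mem_sigma, Finset.mem_filter, Finset.mem_powersetCard]
    exact and_congr_left fun _ => ⟨fun h => h.2, fun h => ⟨h.1, h⟩⟩
  let f : (Σ _ : Fin n → ℝ, Finset (Fin n)) → Set (Fin n → ℝ) :=
    fun p => frameFace S p.1 (b p.1) p.2
  have hinj : Set.InjOn f A := by
    rintro ⟨v, I⟩ hp ⟨v', I'⟩ hp' heq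
    obtain ⟨hv, hI, -⟩ := (hmemA _).1 hp
    obtain ⟨hv', hI', -⟩ := (hmemA _).1 hp'
    simp only at hv hI hv' hI'
    change frameFace S v (b v) I = frameFace S v' (b v') I' at heq
    have hvv : v = v' := by
      by_contra hne
      have h1 := (hb v hv).lt_of_mem_frameFace (fun i hi => (Finset.mem_filter.1 (hI hi)).2)
        (heq ▸ (hb v' hv').mem_frameFace I') (Ne.symm hne)
      have h2 := (hb v' hv').lt_of_mem_frameFace (fun i hi => (Finset.mem_filter.1 (hI' hi)).2)
        (heq ▸ (hb v hv).mem_frameFace I) hne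
      exact lt_asymm h1 h2
    subst hvv
    have : I = I' := by
      ext i
      obtain ⟨c, hc, hmem⟩ := (hb v hv).add_mem i
      rw [← IsVertexFrame.add_smul_mem_frameFace_iff hc hmem, heq,
        IsVertexFrame.add_smul_mem_frameFace_iff hc hmem]
    rw [this]
  have himage : {F | IsFaceOf (convexHull ℝ (S : Set (Fin n → ℝ))) F ∧ faceDim F = k} =
      f '' A := by
    refine Set.Subset.antisymm ?_ ?_
    · rintro F ⟨hF, hdim⟩
      obtain ⟨u, v, hv, huv, rfl⟩ := (isFaceOf_convexHull_iff hS).1 hF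
      obtain ⟨p, hp, hpu, hmin⟩ := exists_isExposedVertex hl hv huv
      rw [← hpu] at huv hdim hmin ⊢
      set I : Finset (Fin n) := Finset.univ.filter fun i => u (b p i) = 0 with hI
      have hIiff : ∀ i, i ∈ I ↔ u (b p i) = 0 := fun i => by simp [hI]
      have heq := (hb p hp).setOf_eq_frameFace huv hIiff
      rw [heq, (hb p hp).faceDim_frameFace] at hdim
      refine ⟨⟨p, I⟩, (hmemA _).2 ⟨hp, fun i hi => ?_, hdim⟩, heq.symm⟩
      obtain ⟨c, hc, hmem⟩ := (hb p hp).add_mem i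
      have h1 := hmin _ hmem (by simp [(hIiff i).1 hi])
      have h2 : l (b p i) ≠ 0 := fun h0 => by
        have h3 := hl hmem hp.1 (by simp [h0])
        simp [hc.ne', (b p).ne_zero i] at h3
      rw [map_add, map_smul, smul_eq_mul, le_add_iff_nonneg_right] at h1
      exact Finset.mem_filter.2 ⟨Finset.mem_univ _,
        lt_of_le_of_ne (nonneg_of_mul_nonneg_right h1 hc) h2.symm⟩
    · rintro _ ⟨⟨v, I⟩, hp, rfl⟩
      obtain ⟨hv, -, hk⟩ := (hmemA _).1 hp
      exact ⟨(hb v hv).isFaceOf_frameFace I, ((hb v hv).faceDim_frameFace I).trans hk⟩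
  rw [himage, hinj.ncard_image, Set.ncard_coe_finset, hcard]

/-- The `h`-polynomial determined by `f_k = ∑ v, (a v).choose k` is `∑ v, t ^ a v`. -/
theorem coeff_sum_choose {ι : Type*} (V : Finset ι) (a : ι → ℕ) {m : ℕ}
    (ha : ∀ v ∈ V, a v ≤ m) (k : ℕ) :
    (∑ j ∈ Finset.range (m + 1),
      Polynomial.C ((∑ v ∈ V, (a v).choose j : ℕ) : ℚ) * (Polynomial.X - 1) ^ j).coeff k =
      ((V.filter fun v => a v = k).card : ℚ) := by
  have h1 : ∑ j ∈ Finset.range (m + 1),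
      Polynomial.C ((∑ v ∈ V, (a v).choose j : ℕ) : ℚ) * (Polynomial.X - 1) ^ j =
      ∑ v ∈ V, (Polynomial.X : Polynomial ℚ) ^ a v := by
    simp only [Nat.cast_sum, map_sum, Finset.sum_mul]
    rw [Finset.sum_comm]
    refine Finset.sum_congr rfl fun v hv => ?_
    have h2 : (Polynomial.X : Polynomial ℚ) ^ a v = ((Polynomial.X - 1) + 1) ^ a v := by ring
    rw [h2, add_pow]
    symm
    refine Finset.sum_subset_zero_on_sdiff
      (Finset.range_subset_range.2 (Nat.succ_le_succ (ha v hv))) ?_ ?_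
    · intro j hj
      simp only [Finset.mem_sdiff, Finset.mem_range] at hj
      rw [Nat.choose_eq_zero_of_lt (by omega)]
      simp
    · intro j _
      simp [mul_comm]
  rw [h1, Polynomial.finsetSum_coeff]
  simp only [Polynomial.coeff_X_pow, Finset.card_filter, Nat.cast_sum, eq_comm (a := k)]
  simp

end DehnSommerville


/-- (Dehn–Sommerville.)  Let `P ⊂ ℝ^n` be a full-dimensional simple
polytope with face numbers `f_k(P)` and `h`-polynomial
`h(P,t) = ∑_{k=0}^n f_k(P)(t-1)^k = ∑_k h_k(P) t^k`.  Then `h_k(P) = h_{n-k}(P)`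
for all `0 ≤ k ≤ n`. -/
theorem stmt7 (n : ℕ) (P : Set (Fin n → ℝ))
    (S : Finset (Fin n → ℝ)) (hP : P = convexHull ℝ (S : Set (Fin n → ℝ)))
    (hfull : affineSpan ℝ P = ⊤) (hsimple : IsSimple P)
    (hpoly : Polynomial ℚ)
    (hh : hpoly = ∑ k ∈ Finset.range (n + 1),
      Polynomial.C (({F : Set (Fin n → ℝ) | IsFaceOf P F ∧ faceDim F = k}).ncard : ℚ) *
        (Polynomial.X - 1) ^ k) :
    ∀ k ≤ n, hpoly.coeff k = hpoly.coeff (n - k) := by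
  subst hP
  have hS : S.Nonempty := by
    rw [Finset.nonempty_iff_ne_empty]
    rintro rfl
    simp at hfull
  have hframe : ∀ v, ∃ b : Module.Basis (Fin n) ℝ (Fin n → ℝ),
      IsExposedVertex S v → IsVertexFrame S v b := by
    intro v
    by_cases hv : IsExposedVertex S v
    · obtain ⟨b, hb⟩ := exists_isVertexFrame hv hfull
        (hsimple {v} hv.isFaceOf (by simp [faceDim, direction_affineSpan])).le
      exact ⟨b, fun _ => hb⟩
    · exact ⟨Pi.basisFun ℝ (Fin n), fun h => absurd h hv⟩
  choose b hb using hframe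
  obtain ⟨l, hl⟩ : ∃ l : (Fin n → ℝ) →ₗ[ℝ] ℝ, Set.InjOn l S := by
    obtain ⟨l, hl⟩ := Module.exists_dual_forall_apply_ne_zero (K := ℝ)
      (fun p : {p : S × S // p.1 ≠ p.2} => (p.1.1 : Fin n → ℝ) - p.1.2)
      (fun p => sub_ne_zero.2 fun h => p.2 (Subtype.ext h))
    refine ⟨l, fun x hx y hy hxy => by_contra fun hne => ?_⟩
    exact hl ⟨(⟨x, hx⟩, ⟨y, hy⟩), fun h => hne (congrArg Subtype.val h)⟩ (by simp [hxy])
  have hl' : Set.InjOn (-l) S := fun x hx y hy h => hl hx hy (neg_injective (by simpa using h))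
  -- Counting with `l` and with `-l` gives two expressions for the same face numbers.
  set V := S.filter (IsExposedVertex S)
  set up : (Fin n → ℝ) → ℕ := fun v => (Finset.univ.filter fun i => 0 < l (b v i)).card with hup
  set down : (Fin n → ℝ) → ℕ := fun v => (Finset.univ.filter fun i => 0 < (-l) (b v i)).card
    with hdown
  have hle : ∀ v, up v ≤ n := fun v => (Finset.card_le_univ _).trans (Fintype.card_fin n).le
  have hle' : ∀ v, down v ≤ n := fun v => (Finset.card_le_univ _).trans (Fintype.card_fin n).le
  have hadd : ∀ v ∈ V, up v + down v = n := by
    intro v hv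
    have hvf := hb v (Finset.mem_filter.1 hv).2
    have hne : ∀ i, l (b v i) ≠ 0 := fun i h0 => by
      obtain ⟨c, hc, hmem⟩ := hvf.add_mem i
      have h3 := hl hmem hvf.mem (by simp [h0])
      simp [hc.ne', (b v).ne_zero i] at h3
    have h1 : (Finset.univ.filter fun i => 0 < (-l) (b v i)) =
        Finset.univ.filter fun i => ¬ 0 < l (b v i) := by
      refine Finset.filter_congr fun i _ => ?_
      simp [le_iff_lt_or_eq, hne i]
    rw [hup, hdown]
    simp only [h1]
    rw [Finset.card_filter_add_card_filter_not, Finset.card_univ, Fintype.card_fin]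
  intro k hk
  have h1 : hpoly.coeff k = ((V.filter fun v => up v = k).card : ℚ) := by
    rw [hh, ← coeff_sum_choose V up (fun v _ => hle v) k]
    simp only [ncard_faces_eq_sum_choose hS b hb hl]
    rfl
  have h2 : hpoly.coeff (n - k) = ((V.filter fun v => down v = n - k).card : ℚ) := by
    rw [hh, ← coeff_sum_choose V down (fun v _ => hle' v) (n - k)]
    simp only [ncard_faces_eq_sum_choose hS b hb hl']
    rfl
  rw [h1, h2]
  congr 2
  refine Finset.filter_congr fun v hv => ?_
  have := hadd v hv
  omega
end
end

section
/- Let P ⊂ ℝ^n be a full-dimensional simple polytope and let F be any face of P (including P itself). Then the following identity holds in ℤ[y]: Σ_{E face of P with F ⊆ E ⊆ P} (y+1)^{dim E} · (−y)^{n − dim E} = (y+1)^{dim F}. -/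
/-!
The faces through a vertex `v` of a simple polytope form a Boolean lattice, on which the identity
is the binomial theorem.

Choose a vertex `v` of `P` inside `F` (`exists_vertex`). The tangent cone of `P` at `v` is
pointed; an irredundant set of generators `G ⊆ S - v` consists of directions of pairwise distinct
edges of `P` at `v` (`exists_ray_functional`), so simplicity gives `|G| ≤ n`. Since `P` is
full-dimensional, `G` spans `ℝ^n`, hence `G` is a basis, and `P - v` lies in the nonnegative
orthant of its coordinates (`exists_vertex_basis`). In these coordinates the faces of `P` through
`v` are exactly the sets where the coordinates outside some `B` vanish; such a face has
dimension `|B|`, and inclusion of faces is inclusion of index sets. With `F` corresponding to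
`A`, the sum becomes
`∑_{B ⊇ A} (y+1)^{|B|} (-y)^{n-|B|} = (y+1)^{|A|} ((y+1) - y)^{n-|A|} = (y+1)^{|A|}`.
-/

open scoped Pointwise Classical
open MeasureTheory Polynomial

noncomputable section

/-! ### Cones and their exposed rays -/

/-- Every finite set contains a generating set of its conic hull in which no element is a
conic combination of the others. -/
lemma exists_irredundant_generators {V : Type*} [DecidableEq V] [AddCommGroup V] [Module ℝ V]
    (T : Finset V) :
    ∃ G ⊆ T, PointedCone.hull ℝ (G : Set V) = PointedCone.hull ℝ (T : Set V) ∧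
      ∀ g ∈ G, g ∉ PointedCone.hull ℝ ((G.erase g : Finset V) : Set V) := by
  induction T using Finset.strongInduction with
  | H T ih =>
    by_cases h : ∃ g ∈ T, g ∈ PointedCone.hull ℝ ((T.erase g : Finset V) : Set V)
    · obtain ⟨g, hg, hgs⟩ := h
      obtain ⟨G, hG, hspan, hirr⟩ := ih (T.erase g) (Finset.erase_ssubset hg)
      refine ⟨G, hG.trans (Finset.erase_subset _ _), hspan.trans ?_, hirr⟩
      apply le_antisymm
      · exact Submodule.span_mono (by exact_mod_cast Finset.erase_subset g T)
      · refine Submodule.span_le.2 fun t ht => ?_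
        by_cases htg : t = g
        · exact htg ▸ hgs
        · exact Submodule.subset_span (by simpa [htg] using ht)
    · push Not at h
      exact ⟨T, subset_rfl, rfl, h⟩

/-- Each element of an irredundant generating set of a pointed cone spans an exposed ray.
The functional comes from separating the line through `g` from the convex hull of the other
generators. -/
lemma exists_ray_functional {n : ℕ} (G : Finset (Fin n → ℝ)) (u₀ : (Fin n → ℝ) →ₗ[ℝ] ℝ)
    (hu₀ : ∀ g ∈ G, u₀ g < 0) (g : Fin n → ℝ) (hg : g ∈ G)
    (hirr : g ∉ PointedCone.hull ℝ ((G.erase g : Finset (Fin n → ℝ)) : Set (Fin n → ℝ))) :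
    ∃ u : (Fin n → ℝ) →ₗ[ℝ] ℝ, u g = 0 ∧ ∀ g' ∈ G, g' ≠ g → u g' < 0 := by
  set K : Set (Fin n → ℝ) := convexHull ℝ ((G.erase g : Finset (Fin n → ℝ)) : Set (Fin n → ℝ))
    with hK
  have hdisj : Disjoint K (Submodule.span ℝ {g} : Set (Fin n → ℝ)) := by
    rw [Set.disjoint_left]
    intro x hx hxg
    obtain ⟨c, rfl⟩ := Submodule.mem_span_singleton.1 hxg
    have h1 : c • g ∈ PointedCone.hull ℝ ((G.erase g : Finset (Fin n → ℝ)) : Set (Fin n → ℝ)) :=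
      convexHull_min Submodule.subset_span (PointedCone.convex _) hx
    have h2 : u₀ (c • g) < 0 := by
      have : K ⊆ {x | u₀ x < 0} := by
        refine convexHull_min (fun x hx => ?_) (convex_halfSpace_lt u₀.isLinear 0)
        exact hu₀ x (Finset.mem_of_mem_erase hx)
      exact this hx
    rw [map_smul, smul_eq_mul] at h2
    have hc : 0 < c := by
      by_contra hc
      nlinarith [hu₀ g hg]
    apply hirr
    have h3 := Submodule.smul_mem _ (⟨c⁻¹, (inv_pos.2 hc).le⟩ : {c : ℝ // 0 ≤ c}) h1
    have h4 : (⟨c⁻¹, (inv_pos.2 hc).le⟩ : {c : ℝ // 0 ≤ c}) • (c • g) = g := by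
      change c⁻¹ • c • g = g
      rw [smul_smul, inv_mul_cancel₀ hc.ne', one_smul]
    rwa [h4] at h3
  obtain ⟨f, a, b, hfa, hab, hfb⟩ := geometric_hahn_banach_compact_closed
    (convex_convexHull ℝ _) ((Finset.finite_toSet _).isCompact_convexHull ℝ)
    (Submodule.convex (Submodule.span ℝ {g})) (Submodule.closed_of_finiteDimensional _) hdisj
  have hb0 : b < 0 := by simpa using hfb 0 (Submodule.zero_mem _)
  refine ⟨f.toLinearMap, ?_, fun g' hg' hne => ?_⟩
  · -- A functional bounded below on a line vanishes on it.
    by_contra hfg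
    have hfg : f g ≠ 0 := hfg
    have := hfb ((b / f g) • g) (Submodule.smul_mem _ _ (Submodule.mem_span_singleton_self g))
    rw [map_smul, smul_eq_mul, div_mul_cancel₀ _ hfg] at this
    exact lt_irrefl _ this
  · have := hfa g' (subset_convexHull ℝ _ (by simp [hne, hg']))
    change f g' < 0
    linarith

/-- On a cone whose generators satisfy `u ≤ 0`, the zeros of `u` are spanned by the generators
on which `u` vanishes. -/
lemma mem_span_of_cone {V : Type*} [AddCommGroup V] [Module ℝ V] (G : Finset V)
    (u : V →ₗ[ℝ] ℝ) (hu : ∀ g ∈ G, u g ≤ 0) (x : V)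
    (hx : x ∈ PointedCone.hull ℝ (G : Set V)) (hux : u x = 0) :
    x ∈ Submodule.span ℝ {g | g ∈ G ∧ u g = 0} := by
  obtain ⟨c, -, rfl⟩ := Submodule.mem_span_finset.1 hx
  have hc : ∀ g, c g • g = (c g : ℝ) • g := fun g => rfl
  simp only [hc, map_sum, map_smul, smul_eq_mul] at hux ⊢
  have h0 := (Finset.sum_eq_zero_iff_of_nonpos
    (fun g hg => mul_nonpos_of_nonneg_of_nonpos (c g).2 (hu g hg))).1 hux
  refine Submodule.sum_mem _ fun g hg => ?_
  rcases mul_eq_zero.1 (h0 g hg) with h | h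
  · rw [show (c g : ℝ) = 0 from h, zero_smul]
    exact Submodule.zero_mem _
  · exact Submodule.smul_mem _ _ (Submodule.subset_span ⟨hg, h⟩)

/-! ### The tangent cone at a vertex -/

/-- The affine hull of a set `E` has direction `W` as soon as `E - v ⊆ W` and `E - v`
contains `0` and a spanning set of `W`. -/
lemma faceDim_eq {n : ℕ} (E A : Set (Fin n → ℝ)) (v : Fin n → ℝ) (hv : v ∈ E)
    (hA : ∀ a ∈ A, v + a ∈ E) (hE : ∀ x ∈ E, x - v ∈ Submodule.span ℝ A) :
    faceDim E = Module.finrank ℝ (Submodule.span ℝ A) := by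
  suffices h : (affineSpan ℝ E).direction = Submodule.span ℝ A by
    unfold faceDim
    rw [h]
  rw [direction_affineSpan, vectorSpan_eq_span_vsub_set_right ℝ hv]
  apply le_antisymm
  · rw [Submodule.span_le]
    rintro _ ⟨x, hx, rfl⟩
    exact hE x hx
  · rw [Submodule.span_le]
    intro a ha
    exact Submodule.subset_span ⟨v + a, hA a ha, by simp⟩

/-- Every face of a polytope contains a vertex, and this vertex strictly maximizes some
linear functional over the generating points. -/
lemma exists_vertex {n : ℕ} (P : Set (Fin n → ℝ)) (S : Finset (Fin n → ℝ))
    (hP : P = convexHull ℝ (S : Set (Fin n → ℝ))) (hne : P.Nonempty)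
    (F : Set (Fin n → ℝ)) (hF : IsFaceOf P F) :
    ∃ v ∈ F, v ∈ S ∧ ∃ u₀ : (Fin n → ℝ) →ₗ[ℝ] ℝ, ∀ s ∈ S, s ≠ v → u₀ s < u₀ v := by
  have hPc : IsCompact P := hP ▸ (Finset.finite_toSet _).isCompact_convexHull ℝ
  have hPconv : Convex ℝ P := hP ▸ convex_convexHull ℝ _
  have hFe : F.Nonempty ∧ IsExposed ℝ P F := by
    rcases hF with rfl | ⟨h, u, hu⟩
    · exact ⟨hne, IsExposed.refl F⟩
    · exact ⟨h, fun _ => ⟨u.toContinuousLinearMap, hu⟩⟩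
  obtain ⟨v, hv⟩ := (hFe.2.isCompact hPc).extremePoints_nonempty hFe.1
  have hvP : v ∈ P.extremePoints ℝ := hFe.2.isExtreme.extremePoints_subset_extremePoints hv
  have hvS : v ∈ S := by
    have := hvP
    rw [hP] at this
    exact_mod_cast extremePoints_convexHull_subset this
  have hvn : v ∉ convexHull ℝ ((S.erase v : Finset (Fin n → ℝ)) : Set (Fin n → ℝ)) := by
    have h := ((hPconv.mem_extremePoints_iff_mem_sdiff_convexHull_sdiff).1 hvP).2
    refine fun h' => h (convexHull_mono ?_ h')
    intro s hs
    have hs' := Finset.mem_erase.1 (Finset.mem_coe.1 hs)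
    exact ⟨hP ▸ subset_convexHull ℝ _ (Finset.mem_coe.2 hs'.2), hs'.1⟩
  obtain ⟨f, a, hfa, hav⟩ := geometric_hahn_banach_closed_point (convex_convexHull ℝ _)
    ((Finset.finite_toSet _).isCompact_convexHull ℝ).isClosed hvn
  refine ⟨v, hv.1, hvS, f.toLinearMap, fun s hs hsv => ?_⟩
  exact (hfa s (subset_convexHull ℝ _ (by simp [hs, hsv]))).trans hav

/-- At a vertex `v` of a full-dimensional simple polytope, the tangent cone is a simplicial cone:
there is a basis of `ℝ^n` consisting of edge directions in whose coordinates `P - v` lies in the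
nonnegative orthant. Irredundant generators of the tangent cone span `ℝ^n` and give
distinct edges at `v`, so simplicity leaves exactly `n` of them. -/
lemma exists_vertex_basis {n : ℕ} (P : Set (Fin n → ℝ)) (S : Finset (Fin n → ℝ))
    (hP : P = convexHull ℝ (S : Set (Fin n → ℝ)))
    (hfull : affineSpan ℝ P = ⊤) (hsimple : IsSimple P)
    (hfin : {F : Set (Fin n → ℝ) | IsFaceOf P F}.Finite)
    (v : Fin n → ℝ) (hv : v ∈ S) (u₀ : (Fin n → ℝ) →ₗ[ℝ] ℝ)
    (hu₀ : ∀ s ∈ S, s ≠ v → u₀ s < u₀ v) :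
    ∃ b : Module.Basis (Fin n) ℝ (Fin n → ℝ), (∀ i, v + b i ∈ P) ∧
      ∀ x ∈ P, ∀ i, 0 ≤ b.repr (x - v) i := by
  have hSP : ∀ s ∈ S, s ∈ P := fun s hs => hP ▸ subset_convexHull ℝ _ (Finset.mem_coe.2 hs)
  have hvP := hSP v hv
  obtain ⟨G, hGT, hspan, hirr⟩ := exists_irredundant_generators ((S.erase v).image (· - v))
  have hGP : ∀ g ∈ G, v + g ∈ P := by
    intro g hg
    obtain ⟨s, hs, rfl⟩ := Finset.mem_image.1 (hGT hg)
    simpa using hSP s (Finset.mem_of_mem_erase hs)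
  have hGu : ∀ g ∈ G, u₀ g < 0 := by
    intro g hg
    obtain ⟨s, hs, rfl⟩ := Finset.mem_image.1 (hGT hg)
    have := hu₀ s (Finset.mem_of_mem_erase hs) (Finset.ne_of_mem_erase hs)
    rw [map_sub]
    linarith
  have hcone : ∀ x ∈ P, x - v ∈ PointedCone.hull ℝ (G : Set (Fin n → ℝ)) := by
    intro x hx
    have hsub : P ⊆ (fun y => y + (-v)) ⁻¹'
        (PointedCone.hull ℝ (G : Set (Fin n → ℝ)) : Set (Fin n → ℝ)) := by
      rw [hP]
      refine convexHull_min (fun s hs => ?_)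
        ((PointedCone.convex _).translate_preimage_left _)
      change s + -v ∈ PointedCone.hull ℝ (G : Set (Fin n → ℝ))
      rw [← sub_eq_add_neg, hspan]
      by_cases hsv : s = v
      · rw [hsv, sub_self]
        exact Submodule.zero_mem _
      · refine Submodule.subset_span (Finset.mem_coe.2 (Finset.mem_image_of_mem _ ?_))
        exact Finset.mem_erase.2 ⟨hsv, hs⟩
    simpa [sub_eq_add_neg] using hsub hx
  -- A functional that is nonpositive on `G` is maximized over `P` at `v`, hence on a face.
  have hle : ∀ u : (Fin n → ℝ) →ₗ[ℝ] ℝ, (∀ g ∈ G, u g ≤ 0) → ∀ x ∈ P, u x ≤ u v := by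
    intro u hu x hx
    obtain ⟨c, -, hc⟩ := Submodule.mem_span_finset.1 (hcone x hx)
    have : u (x - v) ≤ 0 := by
      rw [← hc, map_sum]
      refine Finset.sum_nonpos fun g hg => ?_
      change u ((c g : ℝ) • g) ≤ 0
      rw [map_smul, smul_eq_mul]
      exact mul_nonpos_of_nonneg_of_nonpos (c g).2 (hu g hg)
    rw [map_sub] at this
    linarith
  have hface : ∀ u : (Fin n → ℝ) →ₗ[ℝ] ℝ, (∀ g ∈ G, u g ≤ 0) →
      IsFaceOf P {x | x ∈ P ∧ ∀ p ∈ P, u p ≤ u x} ∧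
      v ∈ {x | x ∈ P ∧ ∀ p ∈ P, u p ≤ u x} ∧
      faceDim {x | x ∈ P ∧ ∀ p ∈ P, u p ≤ u x} =
        Module.finrank ℝ (Submodule.span ℝ {g | g ∈ G ∧ u g = 0}) := by
    intro u hu
    have hvm : v ∈ {x | x ∈ P ∧ ∀ p ∈ P, u p ≤ u x} := ⟨hvP, hle u hu⟩
    refine ⟨Or.inr ⟨⟨v, hvm⟩, u, rfl⟩, hvm, faceDim_eq _ _ v hvm ?_ ?_⟩
    · rintro g ⟨hg, hug⟩
      refine ⟨hGP g hg, fun p hp => ?_⟩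
      rw [map_add, hug, add_zero]
      exact hle u hu p hp
    · rintro x ⟨hx, hxm⟩
      refine mem_span_of_cone G u hu _ (hcone x hx) ?_
      rw [map_sub, sub_eq_zero]
      exact le_antisymm (hle u hu x hx) (hxm v hvP)
  -- The vertex `{v}` is the face exposed by `u₀`.
  have hvface : IsFaceOf P {v} ∧ faceDim ({v} : Set (Fin n → ℝ)) = 0 := by
    obtain ⟨h1, h2, -⟩ := hface u₀ (fun g hg => (hGu g hg).le)
    have heq : {x | x ∈ P ∧ ∀ p ∈ P, u₀ p ≤ u₀ x} = {v} := by
      refine Set.Subset.antisymm ?_ (Set.singleton_subset_iff.2 h2)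
      rintro x ⟨hx, hxm⟩
      have := mem_span_of_cone G u₀ (fun g hg => (hGu g hg).le) _ (hcone x hx)
        (by rw [map_sub, sub_eq_zero]; exact le_antisymm (h2.2 x hx) (hxm v hvP))
      have hemp : {g | g ∈ G ∧ u₀ g = 0} = ∅ := by
        ext g
        simp only [Set.mem_ofPred_eq, Set.mem_empty_iff_false, iff_false, not_and]
        exact fun hg => (hGu g hg).ne
      rw [hemp, Submodule.span_empty, Submodule.mem_bot, sub_eq_zero] at this
      exact this
    rw [heq] at h1
    refine ⟨h1, ?_⟩
    unfold faceDim
    rw [direction_affineSpan, vectorSpan_singleton, finrank_bot]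
  have hcard : G.card ≤ n := by
    have hray : ∀ g ∈ G, ∃ u : (Fin n → ℝ) →ₗ[ℝ] ℝ,
        u g = 0 ∧ ∀ g' ∈ G, g' ≠ g → u g' < 0 :=
      fun g hg => exists_ray_functional G u₀ hGu g hg (hirr g hg)
    choose! w hw0 hwneg using hray
    have hwle : ∀ g ∈ G, ∀ g' ∈ G, w g g' ≤ 0 := by
      intro g hg g' hg'
      by_cases h : g' = g
      · rw [h, hw0 g hg]
      · exact (hwneg g hg g' hg' h).le
    refine le_of_le_of_eq ?_ (hsimple {v} hvface.1 hvface.2)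
    rw [← Set.ncard_coe_finset]
    refine Set.ncard_le_ncard_of_injOn (fun g => {x | x ∈ P ∧ ∀ p ∈ P, w g p ≤ w g x})
      ?_ ?_ (hfin.subset fun E hE => hE.1)
    · intro g hg
      have hg : g ∈ G := hg
      obtain ⟨h1, h2, h3⟩ := hface (w g) (hwle g hg)
      refine ⟨h1, ?_, Set.singleton_subset_iff.2 h2⟩
      have hsing : {g' | g' ∈ G ∧ w g g' = 0} = {g} := by
        ext g'
        simp only [Set.mem_ofPred_eq, Set.mem_singleton_iff]
        constructor
        · rintro ⟨hg', h0⟩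
          by_contra hne
          exact (hwneg g hg g' hg' hne).ne h0
        · rintro rfl
          exact ⟨hg, hw0 _ hg⟩
      rw [hsing] at h3
      rw [h3, finrank_span_singleton]
      rintro rfl
      simpa using hGu 0 hg
    · intro g hg g' hg' heq
      have hg : g ∈ G := hg
      have hg' : g' ∈ G := hg'
      by_contra hne
      have hmem : v + g ∈ {x | x ∈ P ∧ ∀ p ∈ P, w g p ≤ w g x} := by
        refine ⟨hGP g hg, fun p hp => ?_⟩
        rw [map_add, hw0 g hg, add_zero]
        exact hle _ (hwle g hg) p hp
      have heq : {x | x ∈ P ∧ ∀ p ∈ P, w g p ≤ w g x} =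
        {x | x ∈ P ∧ ∀ p ∈ P, w g' p ≤ w g' x} := heq
      rw [heq] at hmem
      have h1 := hmem.2 v hvP
      rw [map_add] at h1
      linarith [hwneg g' hg' g hg hne]
  have htop : Submodule.span ℝ (G : Set (Fin n → ℝ)) = ⊤ := by
    have h1 : vectorSpan ℝ P = ⊤ := by
      rw [← direction_affineSpan, hfull, AffineSubspace.direction_top]
    rw [vectorSpan_eq_span_vsub_set_right ℝ hvP] at h1
    rw [eq_top_iff, ← h1, Submodule.span_le]
    rintro _ ⟨x, hx, rfl⟩
    have := mem_span_of_cone G 0 (fun _ _ => le_rfl) _ (hcone x hx) rfl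
    simpa using this
  have hfr : Module.finrank ℝ (Fin n → ℝ) = n := by simp
  have hcard' : G.card = n := by
    refine le_antisymm hcard ?_
    have := finrank_span_finset_le_card (R := ℝ) G
    rwa [Set.finrank, htop, finrank_top, hfr] at this
  let e : Fin n ≃ G := (G.equivFinOfCardEq hcard').symm
  let f : Fin n → (Fin n → ℝ) := fun i => (e i : Fin n → ℝ)
  have hrange : Set.range f = (G : Set (Fin n → ℝ)) := by
    ext x
    constructor
    · rintro ⟨i, rfl⟩
      exact (e i).2
    · intro hx
      exact ⟨e.symm ⟨x, hx⟩, by simp [f]⟩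
  have hli : LinearIndependent ℝ f :=
    linearIndependent_of_top_le_span_of_card_eq_finrank (by rw [hrange, htop]) (by simp)
  refine ⟨Module.Basis.mk hli (by rw [hrange, htop]), ?_, ?_⟩
  · intro i
    rw [Module.Basis.mk_apply]
    exact hGP _ (e i).2
  · intro x hx i
    obtain ⟨c, -, hc⟩ := Submodule.mem_span_finset.1 (hcone x hx)
    rw [← hc, map_sum, Finsupp.finsetSum_apply]
    refine Finset.sum_nonneg fun g hg => ?_
    change 0 ≤ (Module.Basis.repr _ ((c g : ℝ) • g)) i
    rw [map_smul, Finsupp.smul_apply, smul_eq_mul]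
    refine mul_nonneg (c g).2 ?_
    obtain ⟨j, rfl⟩ : g ∈ Set.range f := hrange ▸ hg
    rw [← Module.Basis.mk_apply hli (by rw [hrange, htop]) j, Module.Basis.repr_self,
      Finsupp.single_apply]
    split_ifs <;> norm_num

/-! ### The faces through a vertex -/

/-- In the coordinates of a basis `b` centred at `v`, the part of `P` on which all coordinates
outside `B` vanish. -/
def coordFace {n : ℕ} (P : Set (Fin n → ℝ)) (v : Fin n → ℝ)
    (b : Module.Basis (Fin n) ℝ (Fin n → ℝ)) (B : Finset (Fin n)) : Set (Fin n → ℝ) :=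
  {x | x ∈ P ∧ ∀ i ∉ B, b.repr (x - v) i = 0}

lemma add_basis_mem_coordFace {n : ℕ} {P : Set (Fin n → ℝ)} {v : Fin n → ℝ}
    {b : Module.Basis (Fin n) ℝ (Fin n → ℝ)} (hb : ∀ i, v + b i ∈ P)
    {B : Finset (Fin n)} {i : Fin n} : v + b i ∈ coordFace P v b B ↔ i ∈ B := by
  constructor
  · rintro ⟨-, h⟩
    by_contra hi
    simpa using h i hi
  · refine fun hi => ⟨hb i, fun j hj => ?_⟩
    have hij : i ≠ j := fun h => hj (h ▸ hi)
    simp [hij]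

lemma coordFace_subset_iff {n : ℕ} {P : Set (Fin n → ℝ)} {v : Fin n → ℝ}
    {b : Module.Basis (Fin n) ℝ (Fin n → ℝ)} (hb : ∀ i, v + b i ∈ P)
    {A B : Finset (Fin n)} : coordFace P v b A ⊆ coordFace P v b B ↔ A ⊆ B := by
  constructor
  · intro h i hi
    exact (add_basis_mem_coordFace hb).1 (h ((add_basis_mem_coordFace hb).2 hi))
  · exact fun h x hx => ⟨hx.1, fun i hi => hx.2 i fun hA => hi (h hA)⟩

lemma faceDim_coordFace {n : ℕ} {P : Set (Fin n → ℝ)} {v : Fin n → ℝ} (hv : v ∈ P)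
    {b : Module.Basis (Fin n) ℝ (Fin n → ℝ)} (hb : ∀ i, v + b i ∈ P)
    (B : Finset (Fin n)) : faceDim (coordFace P v b B) = B.card := by
  rw [faceDim_eq (coordFace P v b B) (Set.image b B) v ⟨hv, by simp⟩]
  · have hli : LinearIndependent ℝ (fun i : B => b i) :=
      b.linearIndependent.comp _ Subtype.val_injective
    have h := finrank_span_eq_card hli
    rw [Fintype.card_coe] at h
    have hrange : Set.image b B = Set.range (fun i : B => b i) := by
      ext x
      simp
    rw [hrange, h]
  · rintro _ ⟨i, hi, rfl⟩
    exact (add_basis_mem_coordFace hb).2 hi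
  · intro x hx
    rw [← b.sum_repr (x - v)]
    refine Submodule.sum_mem _ fun i _ => ?_
    by_cases hi : i ∈ B
    · exact Submodule.smul_mem _ _ (Submodule.subset_span ⟨i, hi, rfl⟩)
    · rw [hx.2 i hi, zero_smul]
      exact Submodule.zero_mem _

/-- The sets `coordFace P v b B` are faces, exposed by minus the sum of the coordinates
outside `B`. -/
lemma isFaceOf_coordFace {n : ℕ} {P : Set (Fin n → ℝ)} {v : Fin n → ℝ} (hv : v ∈ P)
    {b : Module.Basis (Fin n) ℝ (Fin n → ℝ)}
    (hpos : ∀ x ∈ P, ∀ i, 0 ≤ b.repr (x - v) i) (B : Finset (Fin n)) :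
    IsFaceOf P (coordFace P v b B) := by
  refine Or.inr ⟨⟨v, hv, by simp⟩, -∑ i ∈ Bᶜ, b.coord i, ?_⟩
  have hval : ∀ x, (-∑ i ∈ Bᶜ, b.coord i) x =
      (-∑ i ∈ Bᶜ, b.coord i) v - ∑ i ∈ Bᶜ, b.repr (x - v) i := by
    intro x
    simp
    ring
  have hnn : ∀ x ∈ P, 0 ≤ ∑ i ∈ Bᶜ, b.repr (x - v) i :=
    fun x hx => Finset.sum_nonneg fun i _ => hpos x hx i
  ext x
  constructor
  · rintro ⟨hx, h0⟩
    refine ⟨hx, fun p hp => ?_⟩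
    have : ∑ i ∈ Bᶜ, b.repr (x - v) i = 0 :=
      Finset.sum_eq_zero fun i hi => h0 i (Finset.mem_compl.1 hi)
    rw [hval p, hval x]
    linarith [hnn p hp]
  · rintro ⟨hx, hm⟩
    refine ⟨hx, fun i hi => ?_⟩
    have h1 := hm v hv
    rw [hval x] at h1
    have h2 : ∑ i ∈ Bᶜ, b.repr (x - v) i = 0 := by linarith [hnn x hx]
    exact (Finset.sum_eq_zero_iff_of_nonneg fun i _ => hpos x hx i).1 h2 i
      (Finset.mem_compl.2 hi)

/-- Every face through `v` is a coordinate face, with `B` the set of basis directions along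
which the exposing functional is constant. -/
lemma exists_eq_coordFace {n : ℕ} {P : Set (Fin n → ℝ)} {v : Fin n → ℝ}
    {b : Module.Basis (Fin n) ℝ (Fin n → ℝ)} (hb : ∀ i, v + b i ∈ P)
    (hpos : ∀ x ∈ P, ∀ i, 0 ≤ b.repr (x - v) i) {E : Set (Fin n → ℝ)}
    (hE : IsFaceOf P E) (hvE : v ∈ E) : ∃ B, E = coordFace P v b B := by
  rcases hE with rfl | ⟨-, u, rfl⟩
  · exact ⟨Finset.univ, by ext; simp [coordFace]⟩
  · have hvP := hvE.1
    have hu : ∀ i, u (b i) ≤ 0 := by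
      intro i
      have := hvE.2 _ (hb i)
      rw [map_add] at this
      linarith
    have hval : ∀ x, u x = u v + ∑ i, b.repr (x - v) i * u (b i) := by
      intro x
      have h : u (x - v) = ∑ i, b.repr (x - v) i * u (b i) := by
        conv_lhs => rw [← b.sum_repr (x - v)]
        simp only [map_sum, map_smul, smul_eq_mul]
      rw [← h, map_sub]
      ring
    refine ⟨Finset.univ.filter fun i => u (b i) = 0, ?_⟩
    ext x
    constructor
    · rintro ⟨hx, hm⟩
      refine ⟨hx, fun i hi => ?_⟩
      have h1 := le_antisymm (hvE.2 x hx) (hm v hvP)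
      rw [hval x] at h1
      have h2 : ∑ i, b.repr (x - v) i * u (b i) = 0 := by linarith
      have h3 := (Finset.sum_eq_zero_iff_of_nonpos fun i _ =>
        mul_nonpos_of_nonneg_of_nonpos (hpos x hx i) (hu i)).1 h2 i (Finset.mem_univ i)
      exact (mul_eq_zero.1 h3).resolve_right (by simpa using hi)
    · rintro ⟨hx, h0⟩
      refine ⟨hx, fun p hp => ?_⟩
      have : ∑ i, b.repr (x - v) i * u (b i) = 0 := by
        refine Finset.sum_eq_zero fun i _ => ?_
        by_cases hi : u (b i) = 0
        · rw [hi, mul_zero]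
        · rw [h0 i (by simpa using hi), zero_mul]
      rw [hval x, this, add_zero]
      exact hvE.2 p hp

/-! ### The binomial identity -/

/-- The binomial identity over the Boolean interval `[A, univ]`: each index outside `A`
contributes a factor `a + c = 1`. -/
lemma sum_superset_pow {n : ℕ} {R : Type*} [CommRing R] (a c : R) (hac : a + c = 1)
    (A : Finset (Fin n)) :
    ∑ B ∈ Finset.univ.filter (fun B => A ⊆ B), a ^ B.card * c ^ (n - B.card) = a ^ A.card := by
  have key : ∑ B ∈ Finset.univ.filter (fun B => A ⊆ B), a ^ B.card * c ^ (n - B.card) =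
      ∑ D ∈ Aᶜ.powerset, a ^ A.card * (a ^ D.card * c ^ (Aᶜ.card - D.card)) := by
    symm
    refine Finset.sum_bij' (fun D _ => A ∪ D) (fun B _ => B \ A) ?_ ?_ ?_ ?_ ?_
    · intro D _
      simp
    · intro B _
      rw [Finset.mem_powerset]
      intro i hi
      exact Finset.mem_compl.2 (Finset.mem_sdiff.1 hi).2
    · intro D hD
      have hdis : Disjoint A D := by
        rw [Finset.mem_powerset] at hD
        exact (disjoint_compl_right).mono_right hD
      rw [Finset.union_sdiff_cancel_left hdis]
    · intro B hB
      exact Finset.union_sdiff_of_subset (Finset.mem_filter.1 hB).2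
    · intro D hD
      have hdis : Disjoint A D := by
        rw [Finset.mem_powerset] at hD
        exact (disjoint_compl_right).mono_right hD
      rw [Finset.card_union_of_disjoint hdis, Finset.card_compl, Fintype.card_fin, pow_add,
        Nat.sub_sub, mul_assoc]
  rw [key, ← Finset.mul_sum, Finset.sum_pow_mul_eq_add_pow, hac, one_pow, mul_one]

/-- For a full-dimensional simple polytope `P ⊂ ℝ^n` and any face `F`,
`∑_{F ⊆ E ⊆ P} (y+1)^{dim E} (-y)^{n - dim E} = (y+1)^{dim F}` in `ℤ[y]`. -/
theorem stmt9 (n : ℕ) (P : Set (Fin n → ℝ))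
    (S : Finset (Fin n → ℝ)) (hP : P = convexHull ℝ (S : Set (Fin n → ℝ)))
    (hfull : affineSpan ℝ P = ⊤) (hsimple : IsSimple P)
    (hfin : {F : Set (Fin n → ℝ) | IsFaceOf P F}.Finite)
    (F : Set (Fin n → ℝ)) (hF : IsFaceOf P F) :
    ∑ E ∈ hfin.toFinset.filter (fun E => F ⊆ E),
        (Polynomial.X + 1 : Polynomial ℤ) ^ faceDim E * (-Polynomial.X) ^ (n - faceDim E)
      = (Polynomial.X + 1) ^ faceDim F := by
  have hne : P.Nonempty := by
    rw [← affineSpan_nonempty ℝ, hfull]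
    exact Set.univ_nonempty
  obtain ⟨v, hvF, hvS, u₀, hu₀⟩ := exists_vertex P S hP hne F hF
  obtain ⟨b, hb, hpos⟩ := exists_vertex_basis P S hP hfull hsimple hfin v hvS u₀ hu₀
  have hvP : v ∈ P := hP ▸ subset_convexHull ℝ _ (Finset.mem_coe.2 hvS)
  obtain ⟨A, rfl⟩ := exists_eq_coordFace hb hpos hF hvF
  rw [faceDim_coordFace hvP hb,
    ← sum_superset_pow (X + 1 : Polynomial ℤ) (-X) (by ring) A]
  symm
  refine Finset.sum_bij (fun B _ => coordFace P v b B) ?_ ?_ ?_ ?_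
  · intro B hB
    simp only [Finset.mem_filter, Set.Finite.mem_toFinset, Set.mem_ofPred_eq]
    exact ⟨isFaceOf_coordFace hvP hpos B,
      (coordFace_subset_iff hb).2 (Finset.mem_filter.1 hB).2⟩
  · intro B _ B' _ h
    exact Finset.Subset.antisymm ((coordFace_subset_iff hb).1 h.subset)
      ((coordFace_subset_iff hb).1 h.superset)
  · intro E hE
    simp only [Finset.mem_filter, Set.Finite.mem_toFinset, Set.mem_ofPred_eq] at hE
    obtain ⟨B, rfl⟩ := exists_eq_coordFace hb hpos hE.1 (hE.2 hvF)
    exact ⟨B, by simpa using (coordFace_subset_iff hb).1 hE.2, rfl⟩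
  · intro B _
    rw [faceDim_coordFace hvP hb]
end
end

section
/- Let P ⊂ ℝ^n be a full-dimensional simple lattice polytope and let G_1(q,y) = Σ_{p=0}^{n} L_p(q)·y^p be the expansion in powers of y of G_1(q,y) := Σ_{F face of P} (y+1)^{dim F} (−y)^{codim F} D_{1,F}(q) (the case φ ≡ 1, d = 0). Then for each 0 ≤ p ≤ n, L_p is a polynomial in q of degree exactly n whose leading coefficient equals binom(n,p) · vol(P), where vol(P) denotes the Lebesgue measure of P. -/
/-!
For a compact convex set `F ⊂ ℝ^n`, the number of lattice points of `qF` is asymptotic to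
`vol(F) q^n`, because the frontier of a convex set is Lebesgue-null
(`tendsto_latticeCount_div_pow`). Hence `D_F(q) / q^n → vol(F)` for every face `F`. A face other
than `P` lies in a hyperplane, so its volume is zero (`IsFaceOf.affineSpan_ne_top`).

Comparing coefficients of `y^p` shows that `L_p(q)` is a fixed linear combination of the `D_F(q)`
in which `D_P(q)` occurs with coefficient `binom(n,p)`, the coefficient of `y^p` in `(y+1)^n`.
Therefore `L_p(q) / q^n → binom(n,p) vol(P)`. This limit is positive since `P` has nonempty
interior, and a polynomial with such a nonzero limit has degree `n` and leading coefficient the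
limit (`natDegree_eq_and_coeff_eq_of_tendsto`).
-/

open scoped Pointwise Classical
open MeasureTheory Polynomial

noncomputable section

open Filter Topology

theorem intVec_injective {n : ℕ} : Function.Injective (intVec (n := n)) := by
  intro a b h
  funext i
  have := congrFun h i
  simpa [intVec] using this

theorem range_intVec {n : ℕ} : Set.range (intVec (n := n)) =
    (Submodule.span ℤ (Set.range (Pi.basisFun ℝ (Fin n))) : Set (Fin n → ℝ)) := by
  ext x
  rw [SetLike.mem_coe, Module.Basis.mem_span_iff_repr_mem]
  simp only [Set.mem_range, Pi.basisFun_repr, algebraMap_int_eq, eq_intCast]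
  constructor
  · rintro ⟨m, rfl⟩ i
    exact ⟨m i, rfl⟩
  · intro h
    choose m hm using h
    exact ⟨m, funext hm⟩

/-- Lattice points of `qF` correspond to points of `F ∩ q⁻¹ℤ^n`. -/
theorem ncard_latticePoints_smul {n : ℕ} (F : Set (Fin n → ℝ)) {q : ℕ} (hq : 0 < q) :
    {m : Fin n → ℤ | intVec m ∈ (q : ℝ) • F}.ncard =
      Nat.card ↑(F ∩ (q : ℝ)⁻¹ •
        (Submodule.span ℤ (Set.range (Pi.basisFun ℝ (Fin n))) : Set (Fin n → ℝ))) := by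
  have hq0 : (q : ℝ) ≠ 0 := by positivity
  rw [Nat.card_coe_set_eq, ← range_intVec,
    ← Set.ncard_image_of_injective _ (intVec_injective (n := n)),
    ← Set.ncard_image_of_injective (F ∩ _) (smul_right_injective (Fin n → ℝ) hq0)]
  congr 1
  change _ = (q : ℝ) • (F ∩ (q : ℝ)⁻¹ • Set.range intVec)
  rw [Set.smul_set_inter₀ hq0, smul_inv_smul₀ hq0]
  ext x
  constructor
  · rintro ⟨m, hm, rfl⟩
    exact ⟨hm, m, rfl⟩
  · rintro ⟨hx, m, rfl⟩
    exact ⟨m, hx, rfl⟩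

theorem tendsto_latticeCount_div_pow {n : ℕ} {F : Set (Fin n → ℝ)} (hF : IsCompact F)
    (hconv : Convex ℝ F) :
    Tendsto (fun q : ℕ => ({m : Fin n → ℤ | intVec m ∈ (q : ℝ) • F}.ncard : ℝ) / (q : ℝ) ^ n)
      atTop (𝓝 (volume.real F)) := by
  have h := tendsto_card_div_pow_atTop_volume F hF.isBounded hF.measurableSet
    (hconv.addHaar_frontier volume)
  rw [Fintype.card_fin] at h
  refine h.congr' ?_
  filter_upwards [eventually_gt_atTop 0] with q hq
  rw [ncard_latticePoints_smul F hq]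

theorem IsFaceOf.isCompact {n : ℕ} {P F : Set (Fin n → ℝ)} (h : IsFaceOf P F)
    (hP : IsCompact P) : IsCompact F := by
  rcases h with rfl | ⟨-, u, rfl⟩
  · exact hP
  · have hu : Continuous u := u.continuous_of_finiteDimensional
    have : {x | x ∈ P ∧ ∀ p ∈ P, u p ≤ u x} = P ∩ ⋂ p ∈ P, {x | u p ≤ u x} := by
      ext x
      simp
    rw [this]
    exact hP.inter_right
      (isClosed_biInter fun p _ => isClosed_le continuous_const hu)

theorem IsFaceOf.convex {n : ℕ} {P F : Set (Fin n → ℝ)} (h : IsFaceOf P F)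
    (hP : Convex ℝ P) : Convex ℝ F := by
  rcases h with rfl | ⟨-, u, rfl⟩
  · exact hP
  · have : {x | x ∈ P ∧ ∀ p ∈ P, u p ≤ u x} = P ∩ ⋂ p ∈ P, {x | u p ≤ u x} := by
      ext x
      simp
    rw [this]
    exact hP.inter (convex_iInter₂ fun p _ => convex_halfSpace_ge u.isLinear (u p))

/-- A proper face lies in a level set of a functional that is nonconstant on `P`. -/
theorem IsFaceOf.affineSpan_ne_top {n : ℕ} {P F : Set (Fin n → ℝ)} (h : IsFaceOf P F)
    (hne : F ≠ P) : affineSpan ℝ F ≠ ⊤ := by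
  rcases h with rfl | ⟨⟨x₀, hx₀⟩, u, hF⟩
  · exact absurd rfl hne
  intro htop
  apply hne
  have hle : affineSpan ℝ F ≤ AffineSubspace.mk' x₀ (LinearMap.ker u) := by
    rw [affineSpan_le]
    intro x hx
    rw [hF] at hx hx₀
    simp only [SetLike.mem_coe, AffineSubspace.mem_mk', vsub_eq_sub, LinearMap.mem_ker, map_sub]
    linarith [hx.2 _ hx₀.1, hx₀.2 _ hx.1]
  have hconst : ∀ x, u x = u x₀ := by
    intro x
    have : x ∈ AffineSubspace.mk' x₀ (LinearMap.ker u) := hle (htop ▸ AffineSubspace.mem_top ℝ _ x)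
    simpa [AffineSubspace.mem_mk', sub_eq_zero] using this
  rw [hF]
  ext x
  simp only [Set.mem_ofPred_eq, hconst, le_refl, implies_true, and_true]

theorem natDegree_eq_and_coeff_eq_of_tendsto {Q : ℝ[X]} {n : ℕ} {c : ℝ} (hc : c ≠ 0)
    (h : Tendsto (fun q : ℕ => Q.eval (q : ℝ) / (q : ℝ) ^ n) atTop (𝓝 c)) :
    Q.natDegree = n ∧ Q.coeff n = c := by
  have key : ∀ q : ℕ, Q.eval (q : ℝ) / (q : ℝ) ^ n =
      Q.eval (q : ℝ) / (X ^ n : ℝ[X]).eval (q : ℝ) := by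
    simp
  simp only [key] at h
  have hcast := tendsto_natCast_atTop_atTop (R := ℝ)
  rcases lt_trichotomy Q.degree (X ^ n : ℝ[X]).degree with hlt | heq | hgt
  · have h0 := (div_tendsto_atTop_zero_of_degree_lt Q (X ^ n) hlt).comp hcast
    exact absurd (tendsto_nhds_unique h h0) hc
  · have h1 := (div_tendsto_atTop_leadingCoeff_div_of_degree_eq Q (X ^ n) heq).comp hcast
    have hdeg : Q.natDegree = n := by
      rw [natDegree_eq_natDegree heq, natDegree_X_pow]
    refine ⟨hdeg, ?_⟩
    have := tendsto_nhds_unique h h1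
    rw [leadingCoeff_X_pow, div_one, leadingCoeff, hdeg] at this
    exact this.symm
  · have h2 := (abs_div_tendsto_atTop_atTop_of_degree_gt Q (X ^ n) hgt
      (pow_ne_zero n X_ne_zero)).comp hcast
    exact absurd h.abs (not_tendsto_nhds_of_tendsto_atTop h2 _)

/-- Extraction of the coefficient of `y^p` from an identity valid for all real `y`. -/
theorem eval_eq_sum_coeff {ι : Type*} {n : ℕ} (s : Finset ι) (a : ℕ → ℝ) (b : ι → ℝ)
    (d : ι → ℕ)
    (h : ∀ y : ℝ, ∑ p ∈ Finset.range (n + 1), a p * y ^ p =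
      ∑ i ∈ s, (y + 1) ^ d i * (-y) ^ (n - d i) * b i) {p : ℕ} (hp : p ≤ n) :
    a p = ∑ i ∈ s, ((X + 1) ^ d i * (-X) ^ (n - d i) : ℝ[X]).coeff p * b i := by
  have hpoly : ∑ p ∈ Finset.range (n + 1), C (a p) * X ^ p =
      ∑ i ∈ s, ((X + 1) ^ d i * (-X) ^ (n - d i) : ℝ[X]) * C (b i) := by
    apply Polynomial.funext
    intro y
    simpa [eval_finsetSum] using h y
  have := congrArg (fun Q : ℝ[X] => Q.coeff p) hpoly
  simpa only [finsetSum_coeff, coeff_mul_C, coeff_C_mul_X_pow, Finset.sum_ite_eq,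
    Finset.mem_range, Nat.lt_succ_of_le hp, if_true] using this

/-- Let `P ⊂ ℝ^n` be a full-dimensional simple lattice polytope and
write `G_1(q,y) = ∑_F (y+1)^{dim F} (-y)^{codim F} D_{1,F}(q) = ∑_{p=0}^n L_p(q) y^p`.
Then each `L_p` is a polynomial in `q` of degree exactly `n` with leading coefficient
`binom(n,p)·vol(P)`, where `vol` is Lebesgue measure. -/
theorem stmt11 (n : ℕ) (P : Set (Fin n → ℝ))
    (S : Finset (Fin n → ℤ))
    (hP : P = convexHull ℝ (intVec '' (S : Set (Fin n → ℤ))))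
    (hfull : affineSpan ℝ P = ⊤) (hsimple : IsSimple P)
    (hfin : {F : Set (Fin n → ℝ) | IsFaceOf P F}.Finite)
    (D : Set (Fin n → ℝ) → Polynomial ℝ)
    (hD : ∀ F, IsFaceOf P F → ∀ q : ℕ, 0 < q →
      (D F).eval (q : ℝ) = ({m : Fin n → ℤ | intVec m ∈ (q : ℝ) • F}).ncard)
    (L : ℕ → Polynomial ℝ)
    (hL : ∀ q y : ℝ, ∑ p ∈ Finset.range (n + 1), (L p).eval q * y ^ p =
      ∑ F ∈ hfin.toFinset, (y + 1) ^ faceDim F * (-y) ^ (n - faceDim F) * (D F).eval q) :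
    ∀ p ≤ n, (L p).natDegree = n ∧
      (L p).coeff n = (n.choose p : ℝ) * (volume P).toReal := by
  have hcpt : IsCompact P := by
    rw [hP]
    exact (S.finite_toSet.image intVec).isCompact_convexHull (𝕜 := ℝ)
  have hconv : Convex ℝ P := hP ▸ convex_convexHull ℝ _
  have hPdim : faceDim P = n := by
    rw [faceDim, hfull, AffineSubspace.direction_top, finrank_top, Module.finrank_fin_fun]
  have hvol : 0 < volume.real P := by
    have hint : (interior P).Nonempty := hconv.interior_nonempty_iff_affineSpan_eq_top.2 hfull
    exact ENNReal.toReal_pos (Measure.measure_pos_of_nonempty_interior volume hint).ne'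
      hcpt.measure_lt_top.ne
  have hlimD : ∀ F, IsFaceOf P F →
      Tendsto (fun q : ℕ => (D F).eval (q : ℝ) / (q : ℝ) ^ n) atTop (𝓝 (volume.real F)) := by
    intro F hF
    refine (tendsto_latticeCount_div_pow (hF.isCompact hcpt) (hF.convex hconv)).congr' ?_
    filter_upwards [eventually_gt_atTop 0] with q hq
    rw [hD F hF q hq]
  intro p hp
  apply natDegree_eq_and_coeff_eq_of_tendsto
  · exact mul_ne_zero (Nat.cast_ne_zero.2 (Nat.choose_pos hp).ne') hvol.ne'
  have hsum : Tendsto (fun q : ℕ => ∑ F ∈ hfin.toFinset,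
      ((X + 1) ^ faceDim F * (-X) ^ (n - faceDim F) : ℝ[X]).coeff p *
        ((D F).eval (q : ℝ) / (q : ℝ) ^ n)) atTop
      (𝓝 (∑ F ∈ hfin.toFinset,
        ((X + 1) ^ faceDim F * (-X) ^ (n - faceDim F) : ℝ[X]).coeff p * volume.real F)) :=
    tendsto_finsetSum _ fun F hF => (hlimD F (hfin.mem_toFinset.1 hF)).const_mul _
  have hval : ∑ F ∈ hfin.toFinset,
      ((X + 1) ^ faceDim F * (-X) ^ (n - faceDim F) : ℝ[X]).coeff p * volume.real F =
        (n.choose p : ℝ) * (volume P).toReal := by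
    rw [Finset.sum_eq_single P]
    · rw [hPdim, Nat.sub_self, pow_zero, mul_one, coeff_X_add_one_pow]
      rfl
    · intro F hF hne
      have h0 : volume F = 0 := measure_mono_null (subset_affineSpan ℝ F)
        (Measure.addHaar_affineSubspace volume _
          ((hfin.mem_toFinset.1 hF).affineSpan_ne_top hne))
      rw [measureReal_def, h0, ENNReal.toReal_zero, mul_zero]
    · intro hnot
      exact absurd (hfin.mem_toFinset.2 (Or.inl rfl)) hnot
  rw [hval] at hsum
  refine hsum.congr fun q => ?_
  rw [eval_eq_sum_coeff hfin.toFinset (fun p => (L p).eval (q : ℝ))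
    (fun F => (D F).eval (q : ℝ)) faceDim (hL q) hp, Finset.sum_div]
  exact Finset.sum_congr rfl fun F _ => (mul_div_assoc _ _ _).symm
end
end
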